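/- arXiv:2006.13870 — 7 statements merged into one kernel-verified Lean document; each statement's English description precedes it below -/
import Mathlib

section
/- For every tree T = [h, q1, q2] in the family F(n), the spectral radius satisfies ρ(T) > √(r2 + 2). -/
/-!
The tree `T` properly contains the star-like tree with `r2 + 1` legs of length 2 around the centre
of the larger sun (the extra leg runs along the path towards `u`). Its spectral radius is `λ = √(r2 + 2)`, with positive eigenvector `λ² - 1` at the centre, `λ` at the
middle of each leg and `1` at each end. Since `T` is strictly larger, its spectral radius
is strictly larger too.

The strict inequality comes from an explicit vector `x ≥ 0` on `T` with `A x ≥ λ x` everywhere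
and `A x > λ x` at the centre of the sun. Such a vector forces `xᵀ A x > λ xᵀ x`, hence an
eigenvalue above `λ` (`lt_specRad_of_subeigenvector`). It is obtained from the eigenvector above by
continuing the extra leg by one more vertex, which leaves room to raise the values along that leg:
at distance `0, 1, 2, 3` from the centre it is `λ² - 1`, `λ + λ⁻³`, `1 + λ⁻²`, `λ⁻¹`, and it
vanishes further away (`legWeight`).
-/

/-- The spectral radius (largest adjacency eigenvalue) of a finite simple graph. -/
noncomputable def specRad {V : Type*} [Fintype V] [DecidableEq V] (G : SimpleGraph V) : ℝ :=
  letI := Classical.decRel G.Adj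
  sSup {x : ℝ | Module.End.HasEigenvalue (Matrix.toLin' (G.adjMatrix ℝ)) x}

/-- Vertex set of the trees `[h, q1, q2]` in the family `F(n)`:
the starlike root `u`, a pendant path with `h` edges, a path with `q1` edges carrying a sun
with `r1` rays at its far end, and a path with `q2` edges carrying a sun with `r2` rays. -/
abbrev FVert (h q1 q2 r1 r2 : ℕ) : Type :=
  Unit ⊕ Fin h ⊕ Fin q1 ⊕ Fin q2 ⊕ (Fin r1 × Fin 2) ⊕ (Fin r2 × Fin 2)

/-- Base adjacency relation for the tree `[h, q1, q2]`. -/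
def FAdj (h q1 q2 r1 r2 : ℕ) : FVert h q1 q2 r1 r2 → FVert h q1 q2 r1 r2 → Prop :=
  fun a b =>
    (∃ i : Fin h, i.val = 0 ∧ a = Sum.inl () ∧ b = Sum.inr (Sum.inl i)) ∨
    (∃ i j : Fin h, j.val = i.val + 1 ∧ a = Sum.inr (Sum.inl i) ∧ b = Sum.inr (Sum.inl j)) ∨
    (∃ i : Fin q1, i.val = 0 ∧ a = Sum.inl () ∧ b = Sum.inr (Sum.inr (Sum.inl i))) ∨
    (∃ i j : Fin q1, j.val = i.val + 1 ∧ a = Sum.inr (Sum.inr (Sum.inl i)) ∧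
      b = Sum.inr (Sum.inr (Sum.inl j))) ∨
    (∃ i : Fin q2, i.val = 0 ∧ a = Sum.inl () ∧ b = Sum.inr (Sum.inr (Sum.inr (Sum.inl i)))) ∨
    (∃ i j : Fin q2, j.val = i.val + 1 ∧ a = Sum.inr (Sum.inr (Sum.inr (Sum.inl i))) ∧
      b = Sum.inr (Sum.inr (Sum.inr (Sum.inl j)))) ∨
    (∃ (i : Fin q1) (s : Fin r1), i.val = q1 - 1 ∧ a = Sum.inr (Sum.inr (Sum.inl i)) ∧
      b = Sum.inr (Sum.inr (Sum.inr (Sum.inr (Sum.inl (s, 0)))))) ∨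
    (∃ s : Fin r1, a = Sum.inr (Sum.inr (Sum.inr (Sum.inr (Sum.inl (s, 0))))) ∧
      b = Sum.inr (Sum.inr (Sum.inr (Sum.inr (Sum.inl (s, 1)))))) ∨
    (∃ (i : Fin q2) (s : Fin r2), i.val = q2 - 1 ∧ a = Sum.inr (Sum.inr (Sum.inr (Sum.inl i))) ∧
      b = Sum.inr (Sum.inr (Sum.inr (Sum.inr (Sum.inr (s, 0)))))) ∨
    (∃ s : Fin r2, a = Sum.inr (Sum.inr (Sum.inr (Sum.inr (Sum.inr (s, 0))))) ∧
      b = Sum.inr (Sum.inr (Sum.inr (Sum.inr (Sum.inr (s, 1))))))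

/-- The tree `[h, q1, q2]` of the family `F(n)` (with fixed sun parameters `r1, r2`). -/
def FTree (h q1 q2 r1 r2 : ℕ) : SimpleGraph (FVert h q1 q2 r1 r2) :=
  SimpleGraph.fromRel (FAdj h q1 q2 r1 r2)

/-! ### Nonnegative subeigenvectors and the spectral radius -/

/-- The quadratic form of the adjacency matrix is bounded by the spectral radius. -/
lemma dotProduct_adjMatrix_le_specRad {V : Type*} [Fintype V] [DecidableEq V]
    (G : SimpleGraph V) [DecidableRel G.Adj] (x : V → ℝ) :
    x ⬝ᵥ (G.adjMatrix ℝ).mulVec x ≤ specRad G * (x ⬝ᵥ x) := by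
  have hset : {y : ℝ | Module.End.HasEigenvalue (Matrix.toLin' (G.adjMatrix ℝ)) y}
      = spectrum ℝ (G.adjMatrix ℝ) := by
    ext y
    rw [Set.mem_ofPred_eq, Module.End.hasEigenvalue_iff_mem_spectrum, Matrix.spectrum_toLin']
  have hrad : specRad G = sSup (spectrum ℝ (G.adjMatrix ℝ)) := by
    rw [← hset]
    unfold specRad
    congr!
  have hbdd : BddAbove (spectrum ℝ (G.adjMatrix ℝ)) :=
    (G.adjMatrix ℝ).finite_real_spectrum.bddAbove
  have hpos : (algebraMap ℝ (Matrix V V ℝ) (specRad G) - G.adjMatrix ℝ).PosSemidef := by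
    rw [Matrix.posSemidef_iff_isHermitian_and_spectrum_nonneg]
    refine ⟨?_, ?_⟩
    · refine Matrix.IsHermitian.sub ?_ (G.isHermitian_adjMatrix ℝ)
      rw [Matrix.algebraMap_eq_diagonal]
      exact Matrix.isHermitian_diagonal _
    · rw [← spectrum.singleton_sub_eq]
      rintro _ ⟨a, rfl, b, hb, rfl⟩
      have := le_csSup hbdd hb
      rw [← hrad] at this
      simpa using this
  have h := hpos.dotProduct_mulVec_nonneg x
  rw [Matrix.sub_mulVec, dotProduct_sub, Algebra.algebraMap_eq_smul_one, Matrix.smul_mulVec,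
    Matrix.one_mulVec, dotProduct_smul, star_trivial, smul_eq_mul] at h
  linarith

/-- A nonnegative vector with `A x ≥ c x`, strictly at a vertex of its support, witnesses that the
spectral radius exceeds `c`. -/
lemma lt_specRad_of_subeigenvector {V : Type*} [Fintype V] [DecidableEq V]
    (G : SimpleGraph V) [DecidableRel G.Adj] (c : ℝ) (x : V → ℝ) (hx : ∀ v, 0 ≤ x v)
    (hle : ∀ v, c * x v ≤ ((G.adjMatrix ℝ).mulVec x) v)
    (w : V) (hw : 0 < x w) (hlt : c * x w < ((G.adjMatrix ℝ).mulVec x) w) :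
    c < specRad G := by
  have h1 := dotProduct_adjMatrix_le_specRad G x
  have h2 : c * (x ⬝ᵥ x) < x ⬝ᵥ (G.adjMatrix ℝ).mulVec x := by
    simp only [dotProduct, Finset.mul_sum]
    refine Finset.sum_lt_sum (fun v _ => ?_) ⟨w, Finset.mem_univ _, ?_⟩
    · have := mul_le_mul_of_nonneg_left (hle v) (hx v)
      linarith
    · have := mul_lt_mul_of_pos_left hlt hw
      linarith
  have h3 : 0 ≤ x ⬝ᵥ x := Finset.sum_nonneg fun v _ => mul_self_nonneg _
  by_contra! hc
  have := mul_le_mul_of_nonneg_right hc h3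
  linarith

lemma sum_le_adjMatrix_mulVec {V : Type*} [Fintype V] (G : SimpleGraph V)
    [DecidableRel G.Adj] (x : V → ℝ) (hx : ∀ v, 0 ≤ x v) (v : V) (S : Finset V)
    (hS : ∀ a ∈ S, G.Adj v a) : ∑ a ∈ S, x a ≤ ((G.adjMatrix ℝ).mulVec x) v := by
  rw [SimpleGraph.adjMatrix_mulVec_apply]
  refine Finset.sum_le_sum_of_subset_of_nonneg (fun a ha => ?_) fun a _ _ => hx a
  simpa using hS a ha

lemma one_le_adjMatrix_mulVec {V : Type*} [Fintype V] (G : SimpleGraph V)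
    [DecidableRel G.Adj] (x : V → ℝ) (hx : ∀ v, 0 ≤ x v) {v a : V}
    (ha : G.Adj v a) : x a ≤ ((G.adjMatrix ℝ).mulVec x) v := by
  simpa using sum_le_adjMatrix_mulVec G x hx v {a} (by simpa using ha)

lemma add_le_adjMatrix_mulVec {V : Type*} [Fintype V] [DecidableEq V] (G : SimpleGraph V)
    [DecidableRel G.Adj] (x : V → ℝ) (hx : ∀ v, 0 ≤ x v) {v a b : V}
    (ha : G.Adj v a) (hb : G.Adj v b) (hab : a ≠ b) :
    x a + x b ≤ ((G.adjMatrix ℝ).mulVec x) v := by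
  have := sum_le_adjMatrix_mulVec G x hx v {a, b} (by simp [ha, hb])
  rwa [Finset.sum_pair hab] at this

/-! ### The test vector -/

/-- The weight, at distance `d` from the centre of the larger sun, of the test vector along the
path from that centre through `u` into the pendant path; `l` stands for `√(r2 + 2)`. -/
noncomputable def legWeight (l : ℝ) : ℕ → ℝ
  | 0 => l ^ 2 - 1
  | 1 => l + (l ^ 3)⁻¹
  | 2 => 1 + (l ^ 2)⁻¹
  | 3 => l⁻¹
  | _ + 4 => 0

lemma legWeight_nonneg {l : ℝ} (hl : 1 < l) (d : ℕ) : 0 ≤ legWeight l d := by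
  match d with
  | 0 => simp only [legWeight]; nlinarith
  | 1 | 2 | 3 | _ + 4 => simp only [legWeight]; positivity

lemma legWeight_interior {l : ℝ} (hl : 1 < l) (d : ℕ) :
    l * legWeight l (d + 1) ≤ legWeight l d + legWeight l (d + 2) := by
  have h0 : l ≠ 0 := by positivity
  match d with
  | 0 => simp only [legWeight]; apply le_of_eq; field_simp; ring
  | 1 =>
    have h1 : l * (l ^ 2)⁻¹ = l⁻¹ := by field_simp
    have h3 : 0 ≤ (l ^ 3)⁻¹ := by positivity
    simp only [legWeight, mul_add, h1]; linarith
  | 2 =>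
    have : 0 ≤ (l ^ 2)⁻¹ := by positivity
    simp only [legWeight, mul_inv_cancel₀ h0]; linarith
  | 3 => simp only [legWeight, mul_zero, add_zero]; positivity
  | _ + 4 => simp [legWeight]

/-- From distance 3 on, the predecessor alone carries the inequality. -/
lemma legWeight_far {l : ℝ} (hl : 1 < l) (d : ℕ) (hd : 2 ≤ d) :
    l * legWeight l (d + 1) ≤ legWeight l d := by
  have h0 : l ≠ 0 := by positivity
  match d, hd with
  | 2, _ =>
    have : 0 ≤ (l ^ 2)⁻¹ := by positivity
    simp only [legWeight, mul_inv_cancel₀ h0]; linarith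
  | 3, _ => simp only [legWeight, mul_zero]; positivity
  | _ + 4, _ => simp [legWeight]

/-- The test vector: `legWeight` along the path from the centre of the larger sun (which is the
last vertex of the `q2`-path) through `u` into the pendant path, the weights `l, 1` on each ray of
that sun, and zero on the part of the tree that carries the smaller sun. -/
noncomputable def testVec (l : ℝ) (h q1 q2 r1 r2 : ℕ) : FVert h q1 q2 r1 r2 → ℝ
  | .inl _ => legWeight l q2
  | .inr (.inl i) => legWeight l (q2 + 1 + i)
  | .inr (.inr (.inl _)) => 0
  | .inr (.inr (.inr (.inl i))) => legWeight l (q2 - 1 - i)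
  | .inr (.inr (.inr (.inr (.inl _)))) => 0
  | .inr (.inr (.inr (.inr (.inr (_, k))))) => if k = 0 then l else 1

/-! ### Edges of the tree -/

section Adjacency

variable {h q1 q2 r1 r2 : ℕ}

lemma FTree_adj_pendant_root (i : Fin h) (hi : i.val = 0) :
    (FTree h q1 q2 r1 r2).Adj (.inr (.inl i)) (.inl ()) := by
  rw [FTree, SimpleGraph.fromRel_adj]
  exact ⟨by simp, .inr (.inl ⟨i, hi, rfl, rfl⟩)⟩

lemma FTree_adj_pendant (i j : Fin h) (hij : j.val = i.val + 1) :
    (FTree h q1 q2 r1 r2).Adj (.inr (.inl j)) (.inr (.inl i)) := by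
  rw [FTree, SimpleGraph.fromRel_adj]
  refine ⟨?_, .inr (.inr (.inl ⟨i, j, hij, rfl, rfl⟩))⟩
  rintro h
  simp only [Sum.inr.injEq, Sum.inl.injEq] at h
  subst h
  omega

lemma FTree_adj_path_root (i : Fin q2) (hi : i.val = 0) :
    (FTree h q1 q2 r1 r2).Adj (.inr (.inr (.inr (.inl i)))) (.inl ()) := by
  rw [FTree, SimpleGraph.fromRel_adj]
  exact ⟨by simp, .inr (.inr (.inr (.inr (.inr (.inl ⟨i, hi, rfl, rfl⟩)))))⟩

lemma FTree_adj_path (i j : Fin q2) (hij : j.val = i.val + 1) :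
    (FTree h q1 q2 r1 r2).Adj (.inr (.inr (.inr (.inl j)))) (.inr (.inr (.inr (.inl i)))) := by
  rw [FTree, SimpleGraph.fromRel_adj]
  refine ⟨?_, .inr (.inr (.inr (.inr (.inr (.inr (.inl ⟨i, j, hij, rfl, rfl⟩))))))⟩
  rintro h
  simp only [Sum.inr.injEq, Sum.inl.injEq] at h
  subst h
  omega

lemma FTree_adj_centre (i : Fin q2) (s : Fin r2) (hi : i.val = q2 - 1) :
    (FTree h q1 q2 r1 r2).Adj (.inr (.inr (.inr (.inl i))))
      (.inr (.inr (.inr (.inr (.inr (s, 0)))))) := by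
  rw [FTree, SimpleGraph.fromRel_adj]
  exact ⟨by simp, .inl (.inr (.inr (.inr (.inr (.inr (.inr (.inr (.inr (.inl
    ⟨i, s, hi, rfl, rfl⟩)))))))))⟩

lemma FTree_adj_ray (s : Fin r2) :
    (FTree h q1 q2 r1 r2).Adj (.inr (.inr (.inr (.inr (.inr (s, 0))))))
      (.inr (.inr (.inr (.inr (.inr (s, 1)))))) := by
  rw [FTree, SimpleGraph.fromRel_adj]
  exact ⟨by simp, .inl (.inr (.inr (.inr (.inr (.inr (.inr (.inr (.inr (.inr
    ⟨s, rfl, rfl⟩)))))))))⟩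

end Adjacency

/-! ### The lower bound -/

/-- Every tree `T = [h, q1, q2]` in the family `F(n)` has spectral radius
strictly larger than `√(r2 + 2)`. -/
theorem specRad_FTree_gt_sqrt (r1 r2 h q1 q2 : ℕ)
    (hr1 : 2 ≤ r1) (hr12 : r1 < r2) (hh : 2 ≤ h) (hq1 : 2 ≤ q1) (hq2 : 2 ≤ q2) :
    specRad (FTree h q1 q2 r1 r2) > Real.sqrt ((r2 : ℝ) + 2) := by
  classical
  set l : ℝ := Real.sqrt ((r2 : ℝ) + 2) with hl_def
  have hr2 : (0 : ℝ) ≤ r2 := Nat.cast_nonneg r2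
  have hl2 : l ^ 2 = (r2 : ℝ) + 2 := Real.sq_sqrt (by linarith)
  have hl : 1 < l := by
    rw [hl_def, Real.lt_sqrt] <;> linarith
  have hl0 : l ≠ 0 := by positivity
  set x := testVec l h q1 q2 r1 r2 with hx_def
  have hx : ∀ v, 0 ≤ x v := by
    rintro (_ | i | i | i | p | ⟨s, k⟩)
    · exact legWeight_nonneg hl _
    · exact legWeight_nonneg hl _
    · exact le_rfl
    · exact legWeight_nonneg hl _
    · exact le_rfl
    · simp only [hx_def, testVec]
      split_ifs <;> linarith
  have hcentre : ∀ i : Fin q2, i.val = q2 - 1 →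
      l * x (.inr (.inr (.inr (.inl i)))) <
        (((FTree h q1 q2 r1 r2).adjMatrix ℝ).mulVec x) (.inr (.inr (.inr (.inl i)))) := by
    intro i hi
    let e : Fin r2 ↪ FVert h q1 q2 r1 r2 :=
      ⟨fun s => .inr (.inr (.inr (.inr (.inr (s, 0))))), fun a b hab => by simpa using hab⟩
    let j : Fin q2 := ⟨q2 - 2, by omega⟩
    have hj : j.val = q2 - 2 := rfl
    have hnot : (.inr (.inr (.inr (.inl j))) : FVert h q1 q2 r1 r2) ∉ Finset.univ.map e := by
      rw [Finset.mem_map]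
      rintro ⟨s, -, hs⟩
      change (.inr (.inr (.inr (.inr (.inr (s, 0))))) : FVert h q1 q2 r1 r2) = _ at hs
      simp at hs
    have key := sum_le_adjMatrix_mulVec (FTree h q1 q2 r1 r2) x hx
      (.inr (.inr (.inr (.inl i)))) (insert (.inr (.inr (.inr (.inl j)))) (Finset.univ.map e)) (by
        intro a ha
        rcases Finset.mem_insert.1 ha with rfl | ha
        · exact FTree_adj_path j i (by omega)
        · obtain ⟨s, -, rfl⟩ := Finset.mem_map.1 ha
          exact FTree_adj_centre i s hi)
    have hxe : ∀ s, x (e s) = l := fun s => by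
      change (if (0 : Fin 2) = 0 then l else 1) = l
      exact if_pos rfl
    have hxi : x (.inr (.inr (.inr (.inl i)))) = l ^ 2 - 1 := by
      simp only [hx_def, testVec, show q2 - 1 - i.val = 0 by omega, legWeight]
    have hxj : x (.inr (.inr (.inr (.inl j)))) = l + (l ^ 3)⁻¹ := by
      simp only [hx_def, testVec, show q2 - 1 - j.val = 1 by omega, legWeight]
    rw [Finset.sum_insert hnot, Finset.sum_map, Finset.sum_congr rfl fun s _ => hxe s, hxj] at key
    simp only [Finset.sum_const, Finset.card_univ, Fintype.card_fin, nsmul_eq_mul] at key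
    refine lt_of_lt_of_le ?_ key
    have h3 : 0 < (l ^ 3)⁻¹ := by positivity
    rw [hxi, hl2]
    linarith
  let c : Fin q2 := ⟨q2 - 1, by omega⟩
  refine lt_specRad_of_subeigenvector (FTree h q1 q2 r1 r2) l x hx ?_
    (.inr (.inr (.inr (.inl c)))) ?_ (hcentre c rfl)
  · have hnn : ∀ v, 0 ≤ (((FTree h q1 q2 r1 r2).adjMatrix ℝ).mulVec x) v := fun v => by
      simpa using sum_le_adjMatrix_mulVec (FTree h q1 q2 r1 r2) x hx v ∅ (by simp)
    rintro (⟨⟩ | i | i | i | p | ⟨s, k⟩)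
    · -- The root, at distance `q2` from the centre.
      have key := add_le_adjMatrix_mulVec (FTree h q1 q2 r1 r2) x hx
        (FTree_adj_path_root ⟨0, by omega⟩ rfl).symm
        (FTree_adj_pendant_root ⟨0, by omega⟩ rfl).symm (by simp)
      refine le_trans ?_ key
      have := legWeight_interior hl (q2 - 1)
      rw [show q2 - 1 + 1 = q2 by omega, show q2 - 1 + 2 = q2 + 1 by omega] at this
      simpa [hx_def, testVec] using this
    · have hf := legWeight_far hl (q2 + i) (by omega)
      rw [show q2 + i.val + 1 = q2 + 1 + i by omega] at hf
      refine le_trans hf ?_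
      rcases Nat.eq_zero_or_pos i.val with hi | hi
      · refine le_trans (le_of_eq ?_) (one_le_adjMatrix_mulVec _ x hx
          (FTree_adj_pendant_root i hi))
        simp [hx_def, testVec, hi]
      · refine le_trans (le_of_eq ?_) (one_le_adjMatrix_mulVec _ x hx
          (FTree_adj_pendant ⟨i - 1, by omega⟩ i (by simp; omega)))
        simp only [hx_def, testVec]
        congr 1
        omega
    · simpa [hx_def, testVec] using hnn _
    · by_cases hi : i.val = q2 - 1
      · exact (hcentre i hi).le
      have hd := legWeight_interior hl (q2 - 1 - (i.val + 1))
      rw [show q2 - 1 - (i.val + 1) + 1 = q2 - 1 - i by omega] at hd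
      refine le_trans hd ?_
      have hup := (FTree_adj_path (h := h) (q1 := q1) (r1 := r1) (r2 := r2) i
        ⟨i + 1, by omega⟩ rfl).symm
      rcases Nat.eq_zero_or_pos i.val with h0 | h0
      · refine le_trans (le_of_eq ?_) (add_le_adjMatrix_mulVec _ x hx hup
          (FTree_adj_path_root i h0) (by simp))
        simp only [hx_def, testVec]
        congr 2
        omega
      · refine le_trans (le_of_eq ?_) (add_le_adjMatrix_mulVec _ x hx hup
          (FTree_adj_path ⟨i - 1, by omega⟩ i (by simp; omega)) (by simp; omega))
        simp only [hx_def, testVec]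
        congr 2
        omega
    · simpa [hx_def, testVec] using hnn _
    · rcases Fin.exists_fin_two.1 ⟨k, rfl⟩ with rfl | rfl
      · refine le_trans (le_of_eq ?_) (add_le_adjMatrix_mulVec _ x hx (FTree_adj_ray s)
          (FTree_adj_centre c s rfl).symm (by simp))
        simp [hx_def, testVec, c, legWeight]
        ring
      · refine le_trans (le_of_eq ?_) (one_le_adjMatrix_mulVec _ x hx (FTree_adj_ray s).symm)
        simp [hx_def, testVec]
  · simp only [hx_def, testVec, c, Nat.sub_self, legWeight]
    linarith
end

section
/- Let T = [h, q1, q2] be any tree in the family F(n) and let j ≥ 3 be an integer. Let T_j be the starlike tree consisting of a center vertex with r2 pendant paths of length 2 and one pendant path of length j attached to it. Then ρ(T) > ρ(T_j). -/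
/-- Base adjacency relation of the starlike tree `T_j`: a center vertex with `r` pendant
paths of length 2 and one pendant path with `j` edges attached to it. -/
def TJAdj (j r : ℕ) : (Unit ⊕ Fin j ⊕ Fin r × Fin 2) → (Unit ⊕ Fin j ⊕ Fin r × Fin 2) → Prop :=
  fun a b =>
    (∃ i : Fin j, i.val = 0 ∧ a = Sum.inl () ∧ b = Sum.inr (Sum.inl i)) ∨
    (∃ i i' : Fin j, i'.val = i.val + 1 ∧ a = Sum.inr (Sum.inl i) ∧ b = Sum.inr (Sum.inl i')) ∨
    (∃ s : Fin r, a = Sum.inl () ∧ b = Sum.inr (Sum.inr (s, 0))) ∨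
    (∃ s : Fin r, a = Sum.inr (Sum.inr (s, 0)) ∧ b = Sum.inr (Sum.inr (s, 1)))

/-- The starlike tree `T_j`: a center with `r` pendant paths of length 2 and one pendant
path with `j` edges. -/
def TJ (j r : ℕ) : SimpleGraph (Unit ⊕ Fin j ⊕ Fin r × Fin 2) :=
  SimpleGraph.fromRel (TJAdj j r)

/-! ### Neighbour sums -/

open Classical in
/-- The sum of the values of `w` over the neighbours of `i`, i.e. the `i`-th entry of `A w`. -/
noncomputable def nbrSum {V : Type*} [Fintype V] (G : SimpleGraph V) (w : V → ℝ) (i : V) : ℝ :=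
  ∑ k, if G.Adj i k then w k else 0

lemma toLin'_adjMatrix_apply {V : Type*} [Fintype V] [DecidableEq V] (G : SimpleGraph V)
    [DecidableRel G.Adj] (w : V → ℝ) (i : V) :
    Matrix.toLin' (G.adjMatrix ℝ) w i = nbrSum G w i := by
  simp only [Matrix.toLin'_apply, Matrix.mulVec, dotProduct, nbrSum, SimpleGraph.adjMatrix_apply,
    ite_mul, one_mul, zero_mul]
  refine Finset.sum_congr rfl fun k _ => ?_
  congr

/-- Lower bound for a neighbour sum from an injective list `g` of some of the neighbours. -/
lemma le_nbrSum {V ι : Type*} [Fintype V] [Fintype ι] {G : SimpleGraph V} {w : V → ℝ}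
    (hw : ∀ i, 0 ≤ w i) {i : V} (g : ι → V) (hg : Function.Injective g)
    (hadj : ∀ s, G.Adj i (g s)) : ∑ s, w (g s) ≤ nbrSum G w i := by
  classical
  rw [← Finset.sum_image (f := w) (s := Finset.univ) (g := g) (fun x _ y _ h => hg h)]
  unfold nbrSum
  rw [← Finset.sum_filter]
  refine Finset.sum_le_sum_of_subset_of_nonneg ?_ fun k _ _ => hw k
  intro k hk
  obtain ⟨s, -, rfl⟩ := Finset.mem_image.1 hk
  simpa using hadj s

/-- Upper bound for a neighbour sum from a list `g` containing all neighbours. -/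
lemma nbrSum_le {V ι : Type*} [Fintype V] [Fintype ι] {G : SimpleGraph V} {w : V → ℝ}
    (hw : ∀ i, 0 ≤ w i) {i : V} (g : ι → V)
    (hadj : ∀ k, G.Adj i k → ∃ s, g s = k) : nbrSum G w i ≤ ∑ s, w (g s) := by
  classical
  have h1 : ∑ s, w (g s) = ∑ k, ∑ s, if g s = k then w k else 0 := by
    rw [Finset.sum_comm]
    simp
  rw [h1]
  unfold nbrSum
  refine Finset.sum_le_sum fun k _ => ?_
  have hnn : ∀ s ∈ Finset.univ, 0 ≤ (if g s = k then w k else 0) := by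
    intro s _
    split_ifs
    · exact hw k
    · exact le_rfl
  split_ifs with h
  · obtain ⟨s, hs⟩ := hadj k h
    have := Finset.single_le_sum hnn (Finset.mem_univ s)
    simpa [hs] using this
  · exact Finset.sum_nonneg hnn

/-! ### Bounding the spectral radius by test vectors -/

/-- If a positive vector `w` satisfies `A w ≤ c w`, no eigenvalue exceeds `c`: compare the two
sides of `A v = x v` at an index maximizing `|v i| / w i`. -/
lemma eigenvalue_le {V : Type*} [Fintype V] [DecidableEq V] (G : SimpleGraph V)
    [DecidableRel G.Adj] (w : V → ℝ) (c : ℝ) (hw : ∀ i, 0 < w i)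
    (h : ∀ i, nbrSum G w i ≤ c * w i) (x : ℝ)
    (hx : Module.End.HasEigenvalue (Matrix.toLin' (G.adjMatrix ℝ)) x) : x ≤ c := by
  classical
  obtain ⟨v, hv⟩ := hx.exists_hasEigenvector
  have hv0 : v ≠ 0 := hv.2
  obtain ⟨i0, hi0⟩ := Function.ne_iff.1 hv0
  obtain ⟨i, -, hi⟩ := Finset.exists_max_image Finset.univ (fun i => |v i| / w i)
    ⟨i0, Finset.mem_univ _⟩
  have hm : 0 < |v i| / w i :=
    (div_pos (abs_pos.2 hi0) (hw i0)).trans_le (hi i0 (Finset.mem_univ _))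
  set m := |v i| / w i with hmdef
  have hvi : |v i| = m * w i := by rw [hmdef, div_mul_cancel₀ _ (hw i).ne']
  have hle : ∀ k, |v k| ≤ m * w k := fun k => by
    have := hi k (Finset.mem_univ _)
    rwa [div_le_iff₀ (hw k)] at this
  have he : nbrSum G v i = x * v i := by
    rw [← toLin'_adjMatrix_apply, hv.apply_eq_smul]
    rfl
  have h2 : |x * v i| ≤ m * nbrSum G w i := by
    rw [← he]
    unfold nbrSum
    refine (Finset.abs_sum_le_sum_abs _ _).trans ?_
    rw [Finset.mul_sum]
    refine Finset.sum_le_sum fun k _ => ?_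
    split_ifs
    · exact hle k
    · simp
  have h3 : |x| * (m * w i) ≤ c * (m * w i) := by
    rw [abs_mul, hvi] at h2
    nlinarith [mul_le_mul_of_nonneg_left (h i) hm.le]
  exact (le_abs_self x).trans (le_of_mul_le_mul_right h3 (mul_pos hm (hw i)))

lemma specRad_le {V : Type*} [Fintype V] [DecidableEq V] (G : SimpleGraph V)
    (w : V → ℝ) (c : ℝ) (hc : 0 ≤ c) (hw : ∀ i, 0 < w i)
    (h : ∀ i, nbrSum G w i ≤ c * w i) : specRad G ≤ c := by
  unfold specRad
  let _ := Classical.decRel G.Adj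
  exact Real.sSup_le (fun x hx => eigenvalue_le G w c hw h x hx) hc

/-- If a nonnegative vector `v` satisfies `A v ≥ c v` with strict inequality at an index of its
support, then `vᵀ A v > c vᵀ v`, so `c - A` is not positive semidefinite and some eigenvalue of `A`
exceeds `c`. -/
lemma lt_specRad {V : Type*} [Fintype V] [DecidableEq V] (G : SimpleGraph V)
    (v : V → ℝ) (c : ℝ) (hv : ∀ i, 0 ≤ v i)
    (h : ∀ i, v i ≠ 0 → c * v i ≤ nbrSum G v i) (u : V) (hu : 0 < v u)
    (hlt : c * v u < nbrSum G v u) : c < specRad G := by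
  unfold specRad
  let _ := Classical.decRel G.Adj
  by_contra hcon
  have hcon := not_lt.1 hcon
  have hbdd : BddAbove {x : ℝ | Module.End.HasEigenvalue (Matrix.toLin' (G.adjMatrix ℝ)) x} := by
    have := Module.End.finite_hasEigenvalue (Matrix.toLin' (G.adjMatrix ℝ))
    exact Set.Finite.bddAbove this
  have hall : ∀ x, Module.End.HasEigenvalue (Matrix.toLin' (G.adjMatrix ℝ)) x → x ≤ c :=
    fun x hx => (le_csSup hbdd hx).trans hcon
  set B : Matrix V V ℝ := c • (1 : Matrix V V ℝ) - G.adjMatrix ℝ with hB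
  have hBv : ∀ y : V → ℝ, B.mulVec y = c • y - Matrix.toLin' (G.adjMatrix ℝ) y := by
    intro y
    rw [hB, Matrix.sub_mulVec, Matrix.smul_mulVec, Matrix.one_mulVec, Matrix.toLin'_apply]
  have hH : B.IsHermitian := by
    rw [Matrix.IsHermitian, Matrix.conjTranspose_eq_transpose_of_trivial, hB]
    simp
  have hpsd : B.PosSemidef := by
    rw [hH.posSemidef_iff_eigenvalues_nonneg]
    intro i
    have h1 := hH.mulVec_eigenvectorBasis i
    rw [hBv] at h1
    have h2 : Module.End.HasEigenvalue (Matrix.toLin' (G.adjMatrix ℝ)) (c - hH.eigenvalues i) := by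
      refine Module.End.hasEigenvalue_of_hasEigenvector
        (x := (hH.eigenvectorBasis i : V → ℝ)) ⟨?_, ?_⟩
      · rw [Module.End.mem_eigenspace_iff, sub_smul, ← h1]
        abel
      · intro h0
        exact hH.eigenvectorBasis.toBasis.ne_zero i (by
          rw [OrthonormalBasis.coe_toBasis]
          ext k
          exact congrFun h0 k)
    have := hall _ h2
    simp only [Pi.zero_apply]
    linarith
  have hq := hpsd.dotProduct_mulVec_nonneg v
  have hneg : ∑ i, v i * (c * v i - nbrSum G v i) < 0 := by
    have : ∑ i, v i * (c * v i - nbrSum G v i) < ∑ _i : V, (0 : ℝ) := by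
      refine Finset.sum_lt_sum (fun i _ => ?_) ⟨u, Finset.mem_univ _, ?_⟩
      · by_cases hi : v i = 0
        · simp [hi]
        · exact mul_nonpos_of_nonneg_of_nonpos (hv i) (sub_nonpos.2 (h i hi))
      · exact mul_neg_of_pos_of_neg hu (sub_neg.2 hlt)
    simpa using this
  rw [hBv] at hq
  simp only [dotProduct, Pi.star_apply, star_trivial, Pi.sub_apply, Pi.smul_apply, smul_eq_mul,
    toLin'_adjMatrix_apply] at hq
  linarith

/-! ### The eigenvector of the infinite starlike tree -/

/-- The parameters of the positive eigenvector of the infinite starlike tree with `r` rays of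
length two: eigenvalue `a⁻¹ + a`, ratio `a` along the infinite path, and values `b`, `d` on the
rays (the center has value `1`). -/
lemma exists_params (r : ℕ) (hr : 3 ≤ r) : ∃ a b d x : ℝ, 0 < a ∧ a < 1 ∧ 0 < b ∧ 0 < d ∧ 0 < x ∧
    x * a = 1 + a ^ 2 ∧ a + r * b = x ∧ 1 + d = x * b ∧ x * d = b := by
  have hr' : (3 : ℝ) ≤ r := by exact_mod_cast hr
  have hcont : ContinuousOn (fun t : ℝ => t ^ 4 + t ^ 2 + 1 - r * (t ^ 2 + 1)) (Set.Icc 1 r) := by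
    fun_prop
  obtain ⟨t, ht, h0⟩ := intermediate_value_Icc (by linarith : (1 : ℝ) ≤ r) hcont
    (show (0 : ℝ) ∈ _ from ⟨by norm_num; linarith, by
      nlinarith [pow_pos (by linarith : (0 : ℝ) < r) 3]⟩)
  simp only at h0
  have ht1 : 1 < t := by
    rcases ht.1.lt_or_eq with h | h
    · exact h
    · subst h; norm_num at h0; linarith
  have htp : 0 < t := by linarith
  have hrp : (0 : ℝ) < r := by linarith
  refine ⟨t⁻¹, t / r, t / r / (t + t⁻¹), t + t⁻¹, by positivity, inv_lt_one_of_one_lt₀ ht1,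
    by positivity, by positivity, by positivity, ?_, ?_, ?_, ?_⟩
  · field_simp
  · field_simp
    ring
  · field_simp
    linear_combination -h0
  · field_simp

/-! ### The starlike tree from above -/

lemma specRad_TJ_le (j r : ℕ) {a b d x : ℝ} (ha : 0 < a)
    (hb : 0 < b) (hd : 0 < d) (hx : 0 < x) (hxa : x * a = 1 + a ^ 2) (h1 : a + r * b = x)
    (h2 : 1 + d = x * b) (h3 : x * d = b) (hj : 3 ≤ j) : specRad (TJ j r) ≤ x := by
  set w : (Unit ⊕ Fin j ⊕ Fin r × Fin 2) → ℝ := fun z => match z with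
    | Sum.inl _ => 1
    | Sum.inr (Sum.inl i) => a ^ (i.val + 1)
    | Sum.inr (Sum.inr (_, e)) => if e = 0 then b else d with hwdef
  have hw : ∀ i, 0 < w i := by
    rintro (_ | i | ⟨s, e⟩)
    · exact one_pos
    · exact pow_pos ha _
    · simp only [hwdef]
      split_ifs <;> assumption
  refine specRad_le _ w x hx.le hw ?_
  have hw' := fun i => (hw i).le
  rintro (_ | ⟨i, hi⟩ | ⟨s, e⟩)
  · refine (nbrSum_le hw' (ι := Option (Fin r)) (fun o => o.elim
      (Sum.inr (Sum.inl ⟨0, by omega⟩)) (fun s => Sum.inr (Sum.inr (s, 0)))) ?_).trans ?_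
    · rintro (_ | ⟨i, hi⟩ | ⟨s, e⟩) hk
      · simp [TJ] at hk
      · refine ⟨none, ?_⟩
        simp [TJ, TJAdj] at hk
        simp [hk]
      · refine ⟨some s, ?_⟩
        simp [TJ, TJAdj] at hk
        simp [hk]
    · simp [Fintype.sum_option, hwdef, h1]
  · -- The neighbour closer to the center, with the center itself when `i = 0`.
    obtain ⟨p, hp, hpw⟩ : ∃ p, (∀ k, (TJ j r).Adj (Sum.inr (Sum.inl ⟨i, hi⟩)) k →
        p = k ∨ ∃ h : i + 1 < j, k = Sum.inr (Sum.inl ⟨i + 1, h⟩)) ∧ w p = a ^ i := by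
      rcases i with _ | i
      · refine ⟨Sum.inl (), ?_, by simp [hwdef]⟩
        rintro (_ | ⟨k, hk'⟩ | ⟨s, e⟩) hk
        · simp
        · right
          simp [TJ, TJAdj] at hk
          simp
          omega
        · simp [TJ, TJAdj] at hk
      · refine ⟨Sum.inr (Sum.inl ⟨i, by omega⟩), ?_, by simp [hwdef]⟩
        rintro (_ | ⟨k, hk'⟩ | ⟨s, e⟩) hk
        · simp [TJ, TJAdj] at hk
        · simp [TJ, TJAdj] at hk
          simp
          omega
        · simp [TJ, TJAdj] at hk
    have hval : x * w (Sum.inr (Sum.inl ⟨i, hi⟩)) = a ^ i + a ^ (i + 2) := by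
      simp only [hwdef]
      linear_combination a ^ i * hxa
    rw [hval]
    by_cases h : i + 1 < j
    · refine (nbrSum_le hw' (ι := Option Unit) (fun o => o.elim p
        (fun _ => Sum.inr (Sum.inl ⟨i + 1, h⟩))) ?_).trans ?_
      · intro k hk
        rcases hp k hk with rfl | ⟨_, rfl⟩
        · exact ⟨none, rfl⟩
        · exact ⟨some (), rfl⟩
      · simp only [Fintype.sum_option, Option.elim, hpw]
        simp [hwdef]
    · refine (nbrSum_le hw' (ι := Unit) (fun _ => p) ?_).trans ?_
      · intro k hk
        rcases hp k hk with rfl | ⟨h', _⟩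
        · exact ⟨(), rfl⟩
        · exact absurd h' h
      · simp only [Finset.univ_unique, Finset.sum_const, Finset.card_singleton, one_smul, hpw]
        have := pow_pos ha (i + 2)
        linarith
  · fin_cases e
    · refine (nbrSum_le hw' (ι := Option Unit) (fun o => o.elim (Sum.inl ())
        (fun _ => Sum.inr (Sum.inr (s, 1)))) ?_).trans ?_
      · rintro (_ | ⟨i, hi⟩ | ⟨s', e⟩) hk
        · exact ⟨none, rfl⟩
        · simp [TJ, TJAdj] at hk
        · refine ⟨some (), ?_⟩
          simp [TJ, TJAdj] at hk
          simp [hk]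
      · simp [Fintype.sum_option, hwdef, h2]
    · refine (nbrSum_le hw' (ι := Unit) (fun _ => Sum.inr (Sum.inr (s, 0))) ?_).trans ?_
      · rintro (_ | ⟨i, hi⟩ | ⟨s', e⟩) hk
        · simp [TJ, TJAdj] at hk
        · simp [TJ, TJAdj] at hk
        · refine ⟨(), ?_⟩
          simp [TJ, TJAdj] at hk
          simp [hk]
      · simp [hwdef, h3]

/-! ### The trees of the family from below -/

lemma lt_specRad_FTree (r1 r2 h q1 q2 : ℕ) {a b d x : ℝ} (ha : 0 < a) (ha1 : a < 1)
    (hb : 0 < b) (hd : 0 < d) (hx : 0 < x) (hxa : x * a = 1 + a ^ 2) (h1 : a + r2 * b = x)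
    (h2 : 1 + d = x * b) (h3 : x * d = b) (hh : 2 ≤ h) (hq1 : 2 ≤ q1) (hq2 : 2 ≤ q2) :
    x < specRad (FTree h q1 q2 r1 r2) := by
  set v : FVert h q1 q2 r1 r2 → ℝ := fun z => match z with
    | Sum.inl _ => a ^ q2
    | Sum.inr (Sum.inl i) => if i.val = 0 then a ^ q2 / x else 0
    | Sum.inr (Sum.inr (Sum.inl i)) => if i.val = 0 then a ^ q2 / x else 0
    | Sum.inr (Sum.inr (Sum.inr (Sum.inl i))) => a ^ (q2 - 1 - i.val)
    | Sum.inr (Sum.inr (Sum.inr (Sum.inr (Sum.inl _)))) => 0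
    | Sum.inr (Sum.inr (Sum.inr (Sum.inr (Sum.inr (_, e))))) => if e = 0 then b else d with hvdef
  have hv : ∀ i, 0 ≤ v i := by
    rintro (_ | i | i | i | i | ⟨s, e⟩) <;> simp only [hvdef] <;> (try split_ifs) <;> positivity
  have hu : x * v (Sum.inl ()) < nbrSum (FTree h q1 q2 r1 r2) v (Sum.inl ()) := by
    refine lt_of_lt_of_le ?_ (le_nbrSum hv (ι := Option Bool) (fun o => o.elim
      (Sum.inr (Sum.inr (Sum.inr (Sum.inl ⟨0, by omega⟩))))
      (fun e => if e then Sum.inr (Sum.inl ⟨0, by omega⟩)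
        else Sum.inr (Sum.inr (Sum.inl ⟨0, by omega⟩)))) ?_ ?_)
    · obtain ⟨q, rfl⟩ : ∃ q, q2 = q + 1 := ⟨q2 - 1, by omega⟩
      simp [Fintype.sum_option, hvdef]
      have h4 : a < 2 / x := by
        rw [lt_div_iff₀ hx]
        nlinarith
      have h5 : x * a ^ (q + 1) = a ^ q + a ^ (q + 1) * a := by linear_combination a ^ q * hxa
      have h6 : a ^ (q + 1) / x + a ^ (q + 1) / x = a ^ (q + 1) * (2 / x) := by ring
      rw [h5, h6]
      have := mul_lt_mul_of_pos_left h4 (pow_pos ha (q + 1))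
      linarith
    · rintro (_ | _ | _) (_ | _ | _) <;> simp
    · rintro (_ | _ | _) <;> simp [FTree, FAdj]
  refine lt_specRad _ v x hv ?_ (Sum.inl ()) (pow_pos ha _) hu
  rintro (_ | ⟨i, hi⟩ | ⟨i, hi⟩ | ⟨i, hi⟩ | i | ⟨s, e⟩) hne
  · exact hu.le
  · have hi0 : i = 0 := by
      by_contra hi0
      simp [hvdef, hi0] at hne
    subst hi0
    refine le_trans ?_ (le_nbrSum hv (ι := Unit) (fun _ => Sum.inl ())
      (Function.injective_of_subsingleton _) (by simp [FTree, FAdj]))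
    simp [hvdef, mul_div_cancel₀ _ hx.ne']
  · have hi0 : i = 0 := by
      by_contra hi0
      simp [hvdef, hi0] at hne
    subst hi0
    refine le_trans ?_ (le_nbrSum hv (ι := Unit) (fun _ => Sum.inl ())
      (Function.injective_of_subsingleton _) (by simp [FTree, FAdj]))
    simp [hvdef, mul_div_cancel₀ _ hx.ne']
  · -- The neighbour on the side of `u`, with `u` itself when `i = 0`.
    obtain ⟨p, hp, hpw, hpn, hpr⟩ : ∃ p, (FTree h q1 q2 r1 r2).Adj
        (Sum.inr (Sum.inr (Sum.inr (Sum.inl ⟨i, hi⟩)))) p ∧ v p = a ^ (q2 - i) ∧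
        (∀ hi' : i + 1 < q2, p ≠ Sum.inr (Sum.inr (Sum.inr (Sum.inl ⟨i + 1, hi'⟩)))) ∧
        (∀ s, p ≠ Sum.inr (Sum.inr (Sum.inr (Sum.inr (Sum.inr s))))) := by
      rcases i with _ | i
      · exact ⟨Sum.inl (), by simp [FTree, FAdj], by simp [hvdef], by simp, by simp⟩
      · refine ⟨Sum.inr (Sum.inr (Sum.inr (Sum.inl ⟨i, by omega⟩))), by simp [FTree, FAdj], ?_,
          by simp; omega, by simp⟩
        simp only [hvdef]
        congr 1
        omega
    by_cases hlast : i + 1 < q2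
    · refine le_trans ?_ (le_nbrSum hv (ι := Option Unit) (fun o => o.elim p
        (fun _ => Sum.inr (Sum.inr (Sum.inr (Sum.inl ⟨i + 1, hlast⟩))))) ?_ ?_)
      · obtain ⟨q, rfl⟩ : ∃ q, q2 = i + 1 + (q + 1) := ⟨q2 - i - 2, by omega⟩
        simp only [Fintype.sum_option, Option.elim, hpw]
        simp only [hvdef, Finset.univ_unique, Finset.sum_const, Finset.card_singleton, one_smul]
        rw [show i + 1 + (q + 1) - 1 - i = q + 1 by omega,
          show i + 1 + (q + 1) - i = q + 2 by omega,
          show i + 1 + (q + 1) - 1 - (i + 1) = q by omega]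
        apply le_of_eq
        linear_combination a ^ q * hxa
      · rintro (_ | _) (_ | _)
        · simp
        · intro h; exact absurd h (hpn _)
        · intro h; exact absurd h.symm (hpn _)
        · simp
      · rintro (_ | _)
        · exact hp
        · simp [FTree, FAdj]
    · have hi' : i = q2 - 1 := by omega
      refine le_trans ?_ (le_nbrSum hv (ι := Option (Fin r2)) (fun o => o.elim p
        (fun s => Sum.inr (Sum.inr (Sum.inr (Sum.inr (Sum.inr (s, 0))))))) ?_ ?_)
      · simp only [Fintype.sum_option, Option.elim, hpw]
        rw [show q2 - i = 1 by omega]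
        simp [hvdef, hi', h1]
      · rintro (_ | s) (_ | s')
        · simp
        · intro h; exact absurd h (hpr _)
        · intro h; exact absurd h.symm (hpr _)
        · simp
      · rintro (_ | s)
        · exact hp
        · simp [FTree, FAdj, hi']
  · simp [hvdef] at hne
  · fin_cases e
    · refine le_trans ?_ (le_nbrSum hv (ι := Option Unit) (fun o => o.elim
        (Sum.inr (Sum.inr (Sum.inr (Sum.inl ⟨q2 - 1, by omega⟩))))
        (fun _ => Sum.inr (Sum.inr (Sum.inr (Sum.inr (Sum.inr (s, 1))))))) ?_ ?_)
      · simp [Fintype.sum_option, hvdef, h2]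
      · rintro (_ | _) (_ | _) <;> simp
      · rintro (_ | _) <;> simp [FTree, FAdj]
    · refine le_trans ?_ (le_nbrSum hv (ι := Unit)
        (fun _ => Sum.inr (Sum.inr (Sum.inr (Sum.inr (Sum.inr (s, 0))))))
        (Function.injective_of_subsingleton _) (by simp [FTree, FAdj]))
      simp [hvdef, h3]

/-- For every tree `T = [h, q1, q2]` in `F(n)` and every `j ≥ 3`,
`ρ(T) > ρ(T_j)`, where `T_j` is the starlike tree with `r2` rays and a path with `j` edges. -/
theorem specRad_FTree_gt_TJ (r1 r2 h q1 q2 j : ℕ)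
    (hr1 : 2 ≤ r1) (hr12 : r1 < r2) (hh : 2 ≤ h) (hq1 : 2 ≤ q1) (hq2 : 2 ≤ q2) (hj : 3 ≤ j) :
    specRad (FTree h q1 q2 r1 r2) > specRad (TJ j r2) := by
  obtain ⟨a, b, d, x, ha, ha1, hb, hd, hx, hxa, h1, h2, h3⟩ := exists_params r2 (by omega)
  exact (specRad_TJ_le j r2 ha hb hd hx hxa h1 h2 h3 hj).trans_lt
    (lt_specRad_FTree r1 r2 h q1 q2 ha ha1 hb hd hx hxa h1 h2 h3 hh hq1 hq2)
end

section
/- Let λ > 2 be a real number, θ = (−λ − √(λ²−4))/2, and let (z_j)_{j≥1} be a sequence of nonzero real numbers satisfying z_{j+1} = −λ − 1/z_j for all j ≥ 1. Suppose β is a real number with βθ^2 + 1 ≠ 0 and z_1 = θ + (θ^{-1} − θ)/(βθ^2 + 1). Then for every j ≥ 1 one has βθ^{2j} + 1 ≠ 0 and z_j = θ + (θ^{-1} − θ)/(β θ^{2j} + 1). -/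
/-!
With `w_j = β θ^(2j) + 1`, so that `w_{j+1} = θ² (w_j - 1) + 1`, the closed form at `j` reads
`z_j = w_{j+1} / (θ w_j)`. Hence `z_j ≠ 0` forces `w_{j+1} ≠ 0`, and since `θ` is a root of
`x² + λ x + 1`, i.e. `-λ = θ + θ⁻¹`, the recurrence gives
`z_{j+1} = θ + (θ⁻¹ w_{j+1} - θ w_j) / w_{j+1} = θ + (θ⁻¹ - θ) / w_{j+1}`.
The claim follows by induction.
-/

/-- Closed form for the recurrence `z_{j+1} = -λ - 1/z_j` (λ > 2):
if `z_1 = θ + (θ⁻¹ - θ)/(βθ² + 1)` with `βθ² + 1 ≠ 0`, then for all `j ≥ 1`,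
`βθ^{2j} + 1 ≠ 0` and `z_j = θ + (θ⁻¹ - θ)/(βθ^{2j} + 1)`,
where `θ = (-λ - √(λ²-4))/2`. -/
theorem closed_form_recurrence (lam : ℝ) (hlam : 2 < lam) (z : ℕ → ℝ) (β : ℝ)
    (θ : ℝ) (hθ : θ = (-lam - Real.sqrt (lam ^ 2 - 4)) / 2)
    (hz0 : ∀ j : ℕ, 1 ≤ j → z j ≠ 0)
    (hrec : ∀ j : ℕ, 1 ≤ j → z (j + 1) = -lam - 1 / z j)
    (hβ : β * θ ^ 2 + 1 ≠ 0)
    (hz1 : z 1 = θ + (θ⁻¹ - θ) / (β * θ ^ 2 + 1)) :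
    ∀ j : ℕ, 1 ≤ j →
      β * θ ^ (2 * j) + 1 ≠ 0 ∧ z j = θ + (θ⁻¹ - θ) / (β * θ ^ (2 * j) + 1) := by
  have hs : Real.sqrt (lam ^ 2 - 4) ^ 2 = lam ^ 2 - 4 := Real.sq_sqrt (by nlinarith)
  have hroot : θ ^ 2 + lam * θ + 1 = 0 := by
    rw [hθ]
    linear_combination hs / 4
  have hθ0 : θ ≠ 0 := by
    rintro rfl
    norm_num at hroot
  have hlam' : -lam = θ + θ⁻¹ := by
    field_simp
    linear_combination -hroot
  intro j hj
  induction j, hj using Nat.le_induction with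
  | base => exact ⟨by simpa using hβ, by simpa using hz1⟩
  | succ j hj ih =>
    obtain ⟨hw, hz⟩ := ih
    have hstep : β * θ ^ (2 * (j + 1)) + 1 = θ ^ 2 * (β * θ ^ (2 * j) + 1 - 1) + 1 := by ring
    rw [hstep]
    generalize β * θ ^ (2 * j) + 1 = w at hw hz
    have hquot : z j = (θ ^ 2 * (w - 1) + 1) / (θ * w) := by
      rw [hz]
      field_simp
      ring
    have hw' : θ ^ 2 * (w - 1) + 1 ≠ 0 := by
      intro h
      exact hz0 j hj (by rw [hquot, h, zero_div])
    refine ⟨hw', ?_⟩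
    rw [hrec j hj, hquot, hlam', one_div_div]
    generalize hv : θ ^ 2 * (w - 1) + 1 = v at hw'
    field_simp
    linear_combination -hv
end

section
/- Let λ > 2 be a real number, θ = (−λ − √(λ²−4))/2, and let (a_j)_{j≥1} be defined by a_1 = −λ and a_{j+1} = −λ − 1/a_j. Then for every j ≥ 1 one has a_j = θ − √(λ²−4)/(θ^{2j} − 1); in particular a_j < θ < 0 for all j, the sequence (a_j) is strictly increasing, and a_j → θ as j → ∞. -/
/-!
`θ` is the root of `x² + λ x + 1 = 0` below `-1`, so `λ = -(θ + θ⁻¹)` and `√(λ²-4) = θ⁻¹ - θ`. With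
`x = θ ^ (2 j)` the claimed value of `a j` is `(θ² x - 1) / (θ (x - 1))`, and the recursion sends it
to the same expression with `θ² x` in place of `x`, which gives the closed form by induction. Since
`θ² > 1`, the powers `θ ^ (2 j)` exceed `1`, increase strictly and tend to infinity, and the
remaining claims are read off from the closed form.
-/

open Filter Topology

/-- For `λ > 2`, the sequence `a_1 = -λ`, `a_{j+1} = -λ - 1/a_j` satisfies
`a_j = θ - √(λ²-4)/(θ^{2j} - 1)` for all `j ≥ 1`, where `θ = (-λ - √(λ²-4))/2`;
in particular `a_j < θ < 0` for all `j ≥ 1`, `(a_j)` is strictly increasing,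
and `a_j → θ` as `j → ∞`. -/
theorem a_seq_closed_form (lam : ℝ) (hlam : 2 < lam) (a : ℕ → ℝ)
    (θ : ℝ) (hθ : θ = (-lam - Real.sqrt (lam ^ 2 - 4)) / 2)
    (ha1 : a 1 = -lam)
    (hrec : ∀ j : ℕ, 1 ≤ j → a (j + 1) = -lam - 1 / a j) :
    (∀ j : ℕ, 1 ≤ j → a j = θ - Real.sqrt (lam ^ 2 - 4) / (θ ^ (2 * j) - 1)) ∧
    (∀ j : ℕ, 1 ≤ j → a j < θ) ∧ θ < 0 ∧
    (∀ j : ℕ, 1 ≤ j → a j < a (j + 1)) ∧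
    Tendsto (fun j : ℕ => a j) atTop (𝓝 θ) := by
  set s := Real.sqrt (lam ^ 2 - 4) with hs
  have hs0 : 0 < s := Real.sqrt_pos.mpr (by nlinarith)
  have hs2 : s * s = lam ^ 2 - 4 := Real.mul_self_sqrt (by nlinarith)
  have hθ1 : θ < -1 := by linarith
  have hθ0 : θ ≠ 0 := by linarith
  have hquad : θ ^ 2 + lam * θ + 1 = 0 := by rw [hθ]; linear_combination hs2 / 4
  have hlamθ : lam = -(θ + 1 / θ) := by field_simp; linear_combination hquad
  have hsθ : s = 1 / θ - θ := by linear_combination 2 * hθ - hlamθ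
  have hsq : 1 < θ ^ 2 := by nlinarith
  have hpow : ∀ j : ℕ, 1 ≤ j → 1 < θ ^ (2 * j) := fun j hj => by
    rw [pow_mul]; exact one_lt_pow₀ hsq (by omega)
  have hform : ∀ j : ℕ, 1 ≤ j → a j = θ - s / (θ ^ (2 * j) - 1) := by
    intro j hj
    induction j, hj using Nat.le_induction with
    | base =>
      have h1 : θ ^ 2 - 1 ≠ 0 := by linarith
      rw [ha1, hlamθ, hsθ, mul_one]
      field_simp
      ring
    | succ j hj ih =>
      have hx := hpow j hj
      have hx' := hpow (j + 1) (by omega)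
      have he : θ ^ (2 * (j + 1)) = θ ^ 2 * θ ^ (2 * j) := by ring
      rw [he] at hx' ⊢
      generalize θ ^ (2 * j) = x at *
      have h1 : x - 1 ≠ 0 := by linarith
      have h2 : θ ^ 2 * x - 1 ≠ 0 := by linarith
      have h3 : a j = (θ ^ 2 * x - 1) / (θ * (x - 1)) := by
        rw [ih, hsθ]
        field_simp
        ring
      rw [hrec j hj, h3, hlamθ, hsθ]
      field_simp
      ring
  refine ⟨hform, fun j hj => ?_, by linarith, fun j hj => ?_, ?_⟩
  · rw [hform j hj]
    have : 0 < s / (θ ^ (2 * j) - 1) := div_pos hs0 (by linarith [hpow j hj])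
    linarith
  · rw [hform j hj, hform (j + 1) (by omega)]
    have hx := hpow j hj
    have hlt : θ ^ (2 * j) < θ ^ (2 * (j + 1)) := by
      rw [pow_mul, pow_mul]; exact pow_lt_pow_right₀ hsq (by omega)
    have := div_lt_div_of_pos_left hs0 (by linarith : 0 < θ ^ (2 * j) - 1)
      (by linarith : θ ^ (2 * j) - 1 < θ ^ (2 * (j + 1)) - 1)
    linarith
  · have h1 : Tendsto (fun j : ℕ => θ ^ (2 * j) - 1) atTop atTop := by
      simp only [pow_mul]
      exact tendsto_atTop_add_const_right _ (-1) (tendsto_pow_atTop_atTop_of_one_lt hsq)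
    have h2 : Tendsto (fun j : ℕ => θ - s / (θ ^ (2 * j) - 1)) atTop (𝓝 θ) := by
      simpa using (h1.const_div_atTop s).const_sub θ
    refine h2.congr' ?_
    filter_upwards [eventually_ge_atTop 1] with j hj using (hform j hj).symm
end

section
/- Let λ > 2 be a real number, θ = (−λ − √(λ²−4))/2, a_2 = −λ + 1/λ, and let r be a real number with a_2θ − rθ^2 ≠ 0. Define β(r) = (r − a_2θ)/(a_2θ − rθ^2). Then β(r)θ^2 + 1 ≠ 0 and the initial value z_1(r) = −λ − r/a_2 satisfies z_1(r) = θ + (θ^{-1} − θ)/(β(r)θ^2 + 1); consequently the sequence defined by z_1(r) = −λ − r/a_2 and z_{j+1}(r) = −λ − 1/z_j(r) satisfies z_j(r) = θ + (θ^{-1} − θ)/(β(r)θ^{2j} + 1) for all j ≥ 1. -/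
/-!
The number `θ` is a root of `x² + λx + 1`, so `-λ = θ + θ⁻¹`, and `θ`, `θ⁻¹` are the fixed points
of the Möbius map `x ↦ -λ - 1/x`. In the coordinate `w` given by `x = θ + (θ⁻¹ - θ)/(w + 1)`, which
sends `w = ∞` to `θ` and `w = 0` to `θ⁻¹`, the map becomes `w ↦ θ²w` (`moebius_step`). The parameter
`β` is chosen so that `w = βθ²` is the coordinate of `z 1`, and the closed form follows by
induction. The denominators `w + 1` never vanish: `βθ² + 1 = a₂θ(1 - θ²)/(a₂θ - rθ²)` is nonzero
because `a₂ < 0` and `θ < -1`, and afterwards `θ²w + 1 = θ(w + 1)x`, with `x ≠ 0` the current term.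
-/

/-- In the coordinate `w` with `x = θ + (θ⁻¹ - θ)/(w + 1)`, the map `x ↦ θ + θ⁻¹ - 1/x` is
multiplication by `θ²`; the new denominator is nonzero because `x` is. -/
lemma moebius_step {θ w x : ℝ} (hθ : θ ≠ 0) (hw : w + 1 ≠ 0)
    (hx : x = θ + (θ⁻¹ - θ) / (w + 1)) (hx0 : x ≠ 0) :
    θ ^ 2 * w + 1 ≠ 0 ∧ θ + θ⁻¹ - 1 / x = θ + (θ⁻¹ - θ) / (θ ^ 2 * w + 1) := by
  have key : θ ^ 2 * w + 1 = θ * (w + 1) * x := by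
    rw [hx]; field_simp; ring
  have hne : θ ^ 2 * w + 1 ≠ 0 := by
    rw [key]; exact mul_ne_zero (mul_ne_zero hθ hw) hx0
  refine ⟨hne, ?_⟩
  have hinv : 1 / x = θ * (w + 1) / (θ ^ 2 * w + 1) := by
    rw [div_eq_div_iff hx0 hne, key]; ring
  rw [hinv]
  field_simp
  ring

/-- For `λ > 2`, `θ = (-λ - √(λ²-4))/2`, `a₂ = -λ + 1/λ`, and a parameter `r` with
`a₂θ - rθ² ≠ 0`, set `β(r) = (r - a₂θ)/(a₂θ - rθ²)`. Then `β(r)θ² + 1 ≠ 0`,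
the initial value `z₁(r) = -λ - r/a₂` equals `θ + (θ⁻¹ - θ)/(β(r)θ² + 1)`, and the
sequence defined by `z₁(r)` and `z_{j+1}(r) = -λ - 1/z_j(r)` satisfies
`z_j(r) = θ + (θ⁻¹ - θ)/(β(r)θ^{2j} + 1)` for all `j ≥ 1`. -/
theorem parametric_seq_closed_form (lam : ℝ) (hlam : 2 < lam) (r : ℝ)
    (θ a2 : ℝ) (hθ : θ = (-lam - Real.sqrt (lam ^ 2 - 4)) / 2) (ha2 : a2 = -lam + 1 / lam)
    (hden : a2 * θ - r * θ ^ 2 ≠ 0)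
    (β : ℝ) (hβdef : β = (r - a2 * θ) / (a2 * θ - r * θ ^ 2))
    (z : ℕ → ℝ)
    (hz1 : z 1 = -lam - r / a2)
    (hzrec : ∀ j : ℕ, 1 ≤ j → z (j + 1) = -lam - 1 / z j)
    (hz0 : ∀ j : ℕ, 1 ≤ j → z j ≠ 0) :
    β * θ ^ 2 + 1 ≠ 0 ∧
    z 1 = θ + (θ⁻¹ - θ) / (β * θ ^ 2 + 1) ∧
    (∀ j : ℕ, 1 ≤ j → z j = θ + (θ⁻¹ - θ) / (β * θ ^ (2 * j) + 1)) := by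
  have hs : Real.sqrt (lam ^ 2 - 4) ^ 2 = lam ^ 2 - 4 := Real.sq_sqrt (by nlinarith)
  have hθ1 : θ < -1 := by
    have := Real.sqrt_nonneg (lam ^ 2 - 4)
    rw [hθ]; linarith
  have hθ0 : θ ≠ 0 := by linarith
  have hroot : θ ^ 2 + lam * θ + 1 = 0 := by
    rw [hθ]; linear_combination hs / 4
  have hlam' : -lam = θ + θ⁻¹ := by
    field_simp; linear_combination -hroot
  have ha0 : a2 ≠ 0 := by
    have : 1 / lam < 1 := by rw [div_lt_one (by linarith)]; linarith
    rw [ha2]; linarith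
  have hsq : 1 - θ ^ 2 ≠ 0 := by nlinarith
  have hform : β * θ ^ 2 + 1 = a2 * θ * (1 - θ ^ 2) / (a2 * θ - r * θ ^ 2) := by
    rw [hβdef, eq_div_iff hden, add_mul, mul_right_comm, div_mul_cancel₀ _ hden]; ring
  have h1 : β * θ ^ 2 + 1 ≠ 0 := by
    rw [hform]; exact div_ne_zero (mul_ne_zero (mul_ne_zero ha0 hθ0) hsq) hden
  have h2 : z 1 = θ + (θ⁻¹ - θ) / (β * θ ^ 2 + 1) := by
    rw [hz1, hlam', hform, div_div_eq_mul_div]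
    field_simp
    ring
  refine ⟨h1, h2, ?_⟩
  -- Nonvanishing of the denominator is carried along with the formula.
  have main : ∀ j : ℕ, 1 ≤ j → β * θ ^ (2 * j) + 1 ≠ 0 ∧
      z j = θ + (θ⁻¹ - θ) / (β * θ ^ (2 * j) + 1) := by
    intro j hj
    induction j, hj using Nat.le_induction with
    | base => exact ⟨h1, h2⟩
    | succ j hj ih =>
      have hw : β * θ ^ (2 * (j + 1)) = θ ^ 2 * (β * θ ^ (2 * j)) := by ring
      rw [hw, hzrec j hj, hlam']
      exact moebius_step hθ0 ih.1 ih.2 (hz0 j hj)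
  exact fun j hj => (main j hj).2
end

section
/- Let λ > 2 be a real number, θ = (−λ − √(λ²−4))/2, a_2 = −λ + 1/λ, r_* = a_2/θ and r^* = a_2θ. Let r be a real number with r_* < r < r^*, and define the sequence (z_j(r)) by z_1(r) = −λ − r/a_2 and z_{j+1}(r) = −λ − 1/z_j(r). Then z_j(r) < 0 for all j ≥ 1, the sequence (z_j(r)) is strictly decreasing, and z_j(r) → θ as j → ∞. -/
/-!
The number `θ` is the root of `x² + λx + 1 = 0` below `-1`, so `-λ = θ + 1/θ` and the recursion
`z ↦ -λ - 1/z` becomes `z' - θ = (z - θ) / (θ z)`. The condition on `r` says exactly that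
`θ < z₁ < 1/θ`, that is, `z₁ > θ` and `q := θ z₁ > 1`. As long as `θ < z ≤ z₁`, we have `θ z ≥ q`,
so the distance to `θ` stays positive and shrinks at least by the factor `1/q < 1` at each step.
This gives negativity, strict decrease and geometric convergence at once.
-/

open Filter Topology

/-- One step of the recursion divides the displacement from the fixed point `θ` by `θ z`. -/
theorem step_sub_fixed {lam θ z : ℝ} (hθ : θ < 0) (hz : z < 0) (hfix : -lam = θ + 1 / θ) :
    (-lam - 1 / z) - θ = (z - θ) / (θ * z) := by
  have h1 := hθ.ne
  have h2 := hz.ne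
  rw [hfix]
  field_simp
  ring

/-- For `λ > 2`, `θ = (-λ - √(λ²-4))/2`, `a₂ = -λ + 1/λ`, `r_* = a₂/θ`, `r^* = a₂θ`, and
`r_* < r < r^*`, the sequence `z₁(r) = -λ - r/a₂`, `z_{j+1}(r) = -λ - 1/z_j(r)` is
negative for all `j ≥ 1`, strictly decreasing, and converges to `θ`. -/
theorem parametric_seq_monotone (lam : ℝ) (hlam : 2 < lam)
    (θ a2 : ℝ) (hθ : θ = (-lam - Real.sqrt (lam ^ 2 - 4)) / 2) (ha2 : a2 = -lam + 1 / lam)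
    (r : ℝ) (hr1 : a2 / θ < r) (hr2 : r < a2 * θ)
    (z : ℕ → ℝ)
    (hz1 : z 1 = -lam - r / a2)
    (hzrec : ∀ j : ℕ, 1 ≤ j → z (j + 1) = -lam - 1 / z j) :
    (∀ j : ℕ, 1 ≤ j → z j < 0) ∧
    (∀ j : ℕ, 1 ≤ j → z (j + 1) < z j) ∧
    Tendsto (fun j : ℕ => z j) atTop (𝓝 θ) := by
  have hs : Real.sqrt (lam ^ 2 - 4) ^ 2 = lam ^ 2 - 4 := Real.sq_sqrt (by nlinarith)
  have hs0 := Real.sqrt_nonneg (lam ^ 2 - 4)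
  have hθ1 : θ < -1 := by rw [hθ]; linarith
  have hθ0 : θ < 0 := by linarith
  have hfix : -lam = θ + 1 / θ := by
    have : θ ^ 2 + lam * θ + 1 = 0 := by rw [hθ]; linear_combination hs / 4
    have h0 := hθ0.ne
    rw [eq_comm, ← sub_eq_zero]
    field_simp
    linarith
  have ha0 : a2 < 0 := by
    have : 1 / lam < 1 := by rw [div_lt_one (by linarith)]; linarith
    rw [ha2]; linarith
  have hr1' : r / a2 < 1 / θ := by
    rw [div_lt_iff_of_neg ha0]
    calc 1 / θ * a2 = a2 / θ := by ring
      _ < r := hr1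
  have hr2' : θ < r / a2 := by
    rw [lt_div_iff_of_neg ha0]; linarith
  have hz1l : θ < z 1 := by rw [hz1, hfix]; linarith
  have hz1u : z 1 < 1 / θ := by rw [hz1, hfix]; linarith
  have hz1neg : z 1 < 0 := hz1u.trans (one_div_neg.mpr hθ0)
  have hq : 1 < θ * z 1 := by
    rw [lt_div_iff_of_neg hθ0] at hz1u; linarith
  -- While `θ < z j ≤ z 1`, the factor `θ * z j` is at least `θ * z 1 > 1`.
  have step : ∀ j, 1 ≤ j → θ < z j → z j ≤ z 1 →
      θ < z (j + 1) ∧ z (j + 1) < z j ∧ z (j + 1) - θ ≤ (z j - θ) / (θ * z 1) := by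
    intro j hj hl hu
    have hqj : θ * z 1 ≤ θ * z j := mul_le_mul_of_nonpos_left hu hθ0.le
    have e := step_sub_fixed hθ0 (hu.trans_lt hz1neg) hfix
    rw [← hzrec j hj] at e
    have hp : 0 < z j - θ := by linarith
    have h1 : 0 < (z j - θ) / (θ * z j) := div_pos hp (by linarith)
    have h2 : (z j - θ) / (θ * z j) < z j - θ := div_lt_self hp (by linarith)
    have h3 : (z j - θ) / (θ * z j) ≤ (z j - θ) / (θ * z 1) :=
      div_le_div_of_nonneg_left hp.le (by linarith) hqj
    exact ⟨by linarith, by linarith, by linarith⟩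
  have inv : ∀ j, 1 ≤ j → θ < z j ∧ z j ≤ z 1 := by
    intro j hj
    induction j, hj using Nat.le_induction with
    | base => exact ⟨hz1l, le_rfl⟩
    | succ j hj ih =>
      obtain ⟨h1, h2, -⟩ := step j hj ih.1 ih.2
      exact ⟨h1, h2.le.trans ih.2⟩
  refine ⟨fun j hj => (inv j hj).2.trans_lt hz1neg,
    fun j hj => (step j hj (inv j hj).1 (inv j hj).2).2.1, ?_⟩
  have geo : ∀ n, z (n + 1) - θ ≤ (z 1 - θ) * (θ * z 1)⁻¹ ^ n := by
    intro n
    induction n with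
    | zero => simp
    | succ n ih =>
      have hn : 1 ≤ n + 1 := Nat.le_add_left 1 n
      calc z (n + 1 + 1) - θ ≤ (z (n + 1) - θ) * (θ * z 1)⁻¹ :=
            (step _ hn (inv _ hn).1 (inv _ hn).2).2.2
        _ ≤ (z 1 - θ) * (θ * z 1)⁻¹ ^ n * (θ * z 1)⁻¹ :=
            mul_le_mul_of_nonneg_right ih (inv_nonneg.mpr (by linarith))
        _ = (z 1 - θ) * (θ * z 1)⁻¹ ^ (n + 1) := by ring
  -- The value `z 0` is unconstrained, so the limit is taken along the shifted sequence.
  rw [← tendsto_add_atTop_iff_nat 1, ← tendsto_sub_nhds_zero_iff]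
  have hlim := (tendsto_pow_atTop_nhds_zero_of_lt_one
    (inv_nonneg.mpr (by linarith : (0 : ℝ) ≤ θ * z 1)) (inv_lt_one_of_one_lt₀ hq)).const_mul
      (z 1 - θ)
  rw [mul_zero] at hlim
  exact squeeze_zero (fun n => sub_nonneg.mpr (inv _ (Nat.le_add_left 1 n)).1.le) geo hlim
end

section
/- Let T0 be a tree with at least two vertices and u a vertex of T0. For integers q1, q2 with 1 ≤ q1 ≤ q2, let T be the tree obtained from T0 by attaching at u two pendant paths with q1 and q2 edges respectively, and let T' be the tree obtained from T0 by attaching at u two pendant paths with q1 − 1 and q2 + 1 edges respectively (only one path if q1 − 1 = 0). Then ρ(T) > ρ(T'). -/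
/-- The graph obtained from `G` by attaching at the vertex `u` two pendant paths with
`q1` and `q2` edges respectively (a path with `0` edges being no path at all). -/
def attachTwoPaths {V : Type*} (G : SimpleGraph V) (u : V) (q1 q2 : ℕ) :
    SimpleGraph (V ⊕ Fin q1 ⊕ Fin q2) :=
  SimpleGraph.fromRel (fun a b =>
    (∃ x y : V, G.Adj x y ∧ a = Sum.inl x ∧ b = Sum.inl y) ∨
    (∃ i : Fin q1, i.val = 0 ∧ a = Sum.inl u ∧ b = Sum.inr (Sum.inl i)) ∨
    (∃ i j : Fin q1, j.val = i.val + 1 ∧ a = Sum.inr (Sum.inl i) ∧ b = Sum.inr (Sum.inl j)) ∨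
    (∃ i : Fin q2, i.val = 0 ∧ a = Sum.inl u ∧ b = Sum.inr (Sum.inr i)) ∨
    (∃ i j : Fin q2, j.val = i.val + 1 ∧ a = Sum.inr (Sum.inr i) ∧ b = Sum.inr (Sum.inr j)))

open Matrix

/-! ### The Chebyshev-type recurrence -/

/-- `cheb r k` is `U_{k-1}(r / 2)`, with `U` the Chebyshev polynomials of the second kind; the index
is shifted so that the sequence starts with the value `0` just beyond the free end of an arm. -/
noncomputable def cheb (r : ℝ) : ℕ → ℝ
  | 0 => 0
  | 1 => 1
  | (k + 2) => r * cheb r (k + 1) - cheb r k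

lemma cheb_zero (r : ℝ) : cheb r 0 = 0 := by rw [cheb]

lemma cheb_one (r : ℝ) : cheb r 1 = 1 := by rw [cheb]

lemma cheb_succ (r : ℝ) (k : ℕ) : cheb r (k + 2) = r * cheb r (k + 1) - cheb r k := by
  rw [cheb]

lemma cheb_cassini (r : ℝ) (k : ℕ) :
    cheb r (k + 1) ^ 2 - r * cheb r (k + 1) * cheb r k + cheb r k ^ 2 = 1 := by
  induction k with
  | zero => simp [cheb_zero, cheb_one]
  | succ k ih =>
    have h := cheb_succ r k
    rw [show k + 1 + 1 = k + 2 from rfl, h]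
    linear_combination ih

lemma cheb_add (r : ℝ) (m n : ℕ) :
    cheb r (m + n + 1) = cheb r (m + 1) * cheb r (n + 1) - cheb r m * cheb r n ∧
    cheb r (m + n + 2) = cheb r (m + 2) * cheb r (n + 1) - cheb r (m + 1) * cheb r n := by
  induction n with
  | zero => simp [cheb_zero, cheb_one]
  | succ n ih =>
    obtain ⟨h1, h2⟩ := ih
    have e1 := cheb_succ r n
    have e2 := cheb_succ r m
    have e3 := cheb_succ r (m + n + 1)
    have h1' : cheb r (m + (n + 1) + 1) =
        cheb r (m + 1) * cheb r (n + 1 + 1) - cheb r m * cheb r (n + 1) := by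
      rw [show m + (n + 1) + 1 = m + n + 2 by ring, h2, show n + 1 + 1 = n + 2 from rfl, e1, e2]
      ring
    refine ⟨h1', ?_⟩
    rw [show m + (n + 1) + 2 = m + n + 1 + 2 by ring, e3,
      show m + n + 1 + 1 = m + n + 2 by ring, h2, h1, show n + 1 + 1 = n + 2 from rfl, e1, e2]
    ring

lemma cheb_vajda (r : ℝ) (a k : ℕ) :
    cheb r (a + k + 1) * cheb r (a + k + 2) - cheb r (a + 1) * cheb r (a + 2) =
      cheb r (a + (a + k) + 3) * cheb r k := by
  have h1 := (cheb_add r a k).1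
  have h2 := (cheb_add r a k).2
  have h3 := (cheb_add r (a + 1) (a + k + 1)).1
  rw [show a + 1 + (a + k + 1) + 1 = a + (a + k) + 3 by ring,
    show a + 1 + 1 = a + 2 from rfl, show a + k + 1 + 1 = a + k + 2 from rfl] at h3
  have e := cheb_succ r a
  have c := cheb_cassini r k
  have e' : cheb r a = r * cheb r (a + 1) - cheb r (a + 2) := by linarith
  rw [h3, h1, h2, e']
  linear_combination (cheb r (a + 1) * cheb r (a + 2)) * c

/-- A solution `g` of the eigenvalue equation along an arm of length `m` (with `g 0` the value at the
attaching vertex and `g (m + 1) = 0` encoding the free end) is a multiple of `cheb` read backwards. -/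
lemma arm_eq (r : ℝ) (m : ℕ) (g : ℕ → ℝ) (hend : g (m + 1) = 0)
    (hrec : ∀ k < m, g k + g (k + 2) = r * g (k + 1)) (k : ℕ) :
    (k ≤ m → g (m - k) = g m * cheb r (k + 1)) ∧ (k ≤ m + 1 → g (m + 1 - k) = g m * cheb r k) := by
  induction k with
  | zero => simp [cheb_zero, cheb_one, hend]
  | succ k ih =>
    have h2 : k + 1 ≤ m + 1 → g (m + 1 - (k + 1)) = g m * cheb r (k + 1) := by
      intro hk
      rw [show m + 1 - (k + 1) = m - k by omega]
      exact ih.1 (by omega)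
    refine ⟨fun hk => ?_, h2⟩
    have i1 := ih.1 (by omega)
    have i2 := ih.2 (by omega)
    have := hrec (m - (k + 1)) (by omega)
    rw [show m - (k + 1) + 2 = m + 1 - k by omega, show m - (k + 1) + 1 = m - k by omega,
      i1, i2] at this
    rw [show k + 1 + 1 = k + 2 from rfl, cheb_succ]
    linear_combination this

/-- The key inequality: `s` is the total weight of the neighbours of `u` in the original tree, `w` the
weight of `u`, and `g`, `h` are the weights along the arms of lengths `a` and `b + 1`. The new arms
of lengths `a + 1` and `b` bring more weight next to `u`. -/
lemma gain_pos (r s w : ℝ) (a b : ℕ) (hab : a < b) (g h : ℕ → ℝ) (hs : 0 < s) (hw : 0 < w)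
    (hg0 : g 0 = w) (hh0 : h 0 = w)
    (hh : ∀ k ≤ b + 1, 0 < h k)
    (hgend : g (a + 1) = 0) (hhend : h (b + 2) = 0)
    (hgrec : ∀ k < a, g k + g (k + 2) = r * g (k + 1))
    (hhrec : ∀ k < b + 1, h k + h (k + 2) = r * h (k + 1))
    (hu : s + g 1 + h 1 = r * w) :
    0 < cheb r (a + 2) ∧ 0 < cheb r (b + 1) ∧
    r * w < s + w * (cheb r (a + 1) / cheb r (a + 2)) + w * (cheb r b / cheb r (b + 1)) := by
  have hc : 0 < h (b + 1) := hh _ le_rfl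
  have hS : ∀ k, 1 ≤ k → k ≤ b + 2 → 0 < cheb r k := by
    intro k h1 h2
    have e := (arm_eq r (b + 1) h hhend hhrec k).2 (by omega)
    have p := hh (b + 1 + 1 - k) (by omega)
    rw [e] at p
    exact (mul_pos_iff_of_pos_left hc).1 p
  have hA0 := (arm_eq r a g hgend hgrec a).1 le_rfl
  have hA1 := (arm_eq r a g hgend hgrec a).2 (by omega)
  have hB0 := (arm_eq r (b + 1) h hhend hhrec (b + 1)).1 le_rfl
  have hB1 := (arm_eq r (b + 1) h hhend hhrec (b + 1)).2 (by omega)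
  rw [Nat.sub_self, hg0] at hA0
  rw [show a + 1 - a = 1 by omega] at hA1
  rw [Nat.sub_self, hh0, show b + 1 + 1 = b + 2 from rfl] at hB0
  rw [show b + 1 + 1 - (b + 1) = 1 by omega] at hB1
  have p1 := hS (a + 1) (by omega) (by omega)
  have p2 := hS (a + 2) (by omega) (by omega)
  have p3 := hS (b + 1) (by omega) (by omega)
  have p4 := hS (b + 2) (by omega) (by omega)
  have hbig : 0 < cheb r (a + b + 3) := by
    have e := (cheb_add r a (b + 2)).1
    rw [show a + (b + 2) + 1 = a + b + 3 by ring, show b + 2 + 1 = b + 3 from rfl] at e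
    have e3 := cheb_succ r (b + 1)
    rw [show b + 1 + 2 = b + 3 from rfl, show b + 1 + 1 = b + 2 from rfl] at e3
    have : h (b + 1) * cheb r (a + b + 3) = s * cheb r (a + 1) := by
      rw [e, e3]
      rw [hA1, hB1] at hu
      linear_combination (-cheb r (a + 1)) * hu + (cheb r a - r * cheb r (a + 1)) * hB0
        - cheb r a * hA0
    have p : 0 < h (b + 1) * cheb r (a + b + 3) := by rw [this]; positivity
    exact (mul_pos_iff_of_pos_left hc).1 p
  obtain ⟨k, rfl⟩ : ∃ k, b = a + k := ⟨b - a, by omega⟩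
  have hv := cheb_vajda r a k
  have pk := hS k (by omega) (by omega)
  rw [← add_assoc a a k] at hv hbig
  have hlt : cheb r (a + 1) * cheb r (a + 2) < cheb r (a + k + 1) * cheb r (a + k + 2) := by
    have := mul_pos hbig pk
    linarith
  have d1 : cheb r (a + 1) / cheb r (a + 2) =
      cheb r a / cheb r (a + 1) + 1 / (cheb r (a + 1) * cheb r (a + 2)) := by
    have c := cheb_cassini r a
    have e := cheb_succ r a
    field_simp
    rw [e]
    linear_combination c
  have d2 : cheb r (a + k) / cheb r (a + k + 1) =
      cheb r (a + k + 1) / cheb r (a + k + 2) -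
        1 / (cheb r (a + k + 1) * cheb r (a + k + 2)) := by
    have c := cheb_cassini r (a + k)
    have e := cheb_succ r (a + k)
    field_simp
    rw [e]
    linear_combination -c
  have hinv := one_div_lt_one_div_of_lt (mul_pos p1 p2) hlt
  have g1 : g 1 = w * (cheb r a / cheb r (a + 1)) := by
    rw [hA1, hA0]; field_simp
  have h1 : h 1 = w * (cheb r (a + k + 1) / cheb r (a + k + 2)) := by
    rw [hB1, hB0]; field_simp
  refine ⟨p2, p3, ?_⟩
  rw [← hu, g1, h1, d1, d2]
  nlinarith [mul_lt_mul_of_pos_left hinv hw]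

/-! ### The spectral radius as a maximum of the Rayleigh quotient -/

lemma specRad_eq {V : Type*} [Fintype V] [DecidableEq V] (G : SimpleGraph V)
    [DecidableRel G.Adj] :
    specRad G = sSup {x : ℝ | Module.End.HasEigenvalue (Matrix.toLin' (G.adjMatrix ℝ)) x} := by
  unfold specRad
  congr!

lemma specRad_isGreatest {V : Type*} [Fintype V] [DecidableEq V] [Nonempty V]
    (G : SimpleGraph V) [DecidableRel G.Adj] :
    IsGreatest {x : ℝ | Module.End.HasEigenvalue (Matrix.toLin' (G.adjMatrix ℝ)) x}
      (specRad G) := by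
  rw [specRad_eq]
  have hfin : Set.Finite
      {x : ℝ | Module.End.HasEigenvalue (Matrix.toLin' (G.adjMatrix ℝ)) x} :=
    Module.End.finite_hasEigenvalue _
  have hH : (G.adjMatrix ℝ).IsHermitian := by
    rw [Matrix.IsHermitian, Matrix.conjTranspose_eq_transpose_of_trivial]
    exact G.isSymm_adjMatrix
  have hne : Set.Nonempty
      {x : ℝ | Module.End.HasEigenvalue (Matrix.toLin' (G.adjMatrix ℝ)) x} := by
    refine ⟨hH.eigenvalues (Classical.arbitrary V), ?_⟩
    apply Module.End.hasEigenvalue_of_hasEigenvector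
      (x := (hH.eigenvectorBasis (Classical.arbitrary V)).ofLp)
    rw [Module.End.hasEigenvector_iff, Module.End.mem_eigenspace_iff]
    refine ⟨?_, ?_⟩
    · simpa using hH.mulVec_eigenvectorBasis (Classical.arbitrary V)
    · intro h0
      apply hH.eigenvectorBasis.toBasis.ne_zero (Classical.arbitrary V)
      ext i
      simpa using congrFun h0 i
  exact ⟨hne.csSup_mem hfin, fun x hx => le_csSup hfin.bddAbove hx⟩

/-- Rayleigh principle: `ρ(G) • 1 - A` is positive semidefinite. -/
lemma specRad_posSemidef {V : Type*} [Fintype V] [DecidableEq V] [Nonempty V]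
    (G : SimpleGraph V) [DecidableRel G.Adj] :
    (specRad G • (1 : Matrix V V ℝ) - G.adjMatrix ℝ).PosSemidef := by
  have hH : (specRad G • (1 : Matrix V V ℝ) - G.adjMatrix ℝ).IsHermitian := by
    rw [Matrix.IsHermitian, Matrix.conjTranspose_eq_transpose_of_trivial]
    simp [G.isSymm_adjMatrix.eq]
  rw [hH.posSemidef_iff_eigenvalues_nonneg]
  intro i
  have he := hH.mulVec_eigenvectorBasis i
  have : Module.End.HasEigenvalue (Matrix.toLin' (G.adjMatrix ℝ))
      (specRad G - hH.eigenvalues i) := by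
    apply Module.End.hasEigenvalue_of_hasEigenvector (x := (hH.eigenvectorBasis i).ofLp)
    rw [Module.End.hasEigenvector_iff, Module.End.mem_eigenspace_iff]
    refine ⟨?_, ?_⟩
    · rw [Matrix.sub_mulVec, Matrix.smul_mulVec, Matrix.one_mulVec] at he
      rw [Matrix.toLin'_apply, sub_smul, ← he]
      abel
    · intro h0
      apply hH.eigenvectorBasis.toBasis.ne_zero i
      ext j
      simpa using congrFun h0 j
  have := (specRad_isGreatest G).2 this
  simp only [Pi.zero_apply]
  linarith

lemma dotProduct_adj_le {V : Type*} [Fintype V] [DecidableEq V] [Nonempty V]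
    (G : SimpleGraph V) [DecidableRel G.Adj] (x : V → ℝ) :
    x ⬝ᵥ (G.adjMatrix ℝ *ᵥ x) ≤ specRad G * (x ⬝ᵥ x) := by
  have := (specRad_posSemidef G).dotProduct_mulVec_nonneg x
  simp only [star_trivial, Matrix.sub_mulVec, Matrix.smul_mulVec, Matrix.one_mulVec,
    dotProduct_sub, dotProduct_smul, smul_eq_mul] at this
  linarith

/-- Perron vector of a connected graph: the entrywise absolute value of an eigenvector for `ρ(G)` still
maximizes the Rayleigh quotient, hence is an eigenvector, and its zero set is closed under adjacency. -/
lemma exists_perron {V : Type*} [Fintype V] [DecidableEq V] (G : SimpleGraph V)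
    [DecidableRel G.Adj] (hG : G.Connected) :
    ∃ x : V → ℝ, (∀ v, 0 < x v) ∧ G.adjMatrix ℝ *ᵥ x = specRad G • x := by
  have := hG.nonempty
  obtain ⟨z, hz⟩ := (specRad_isGreatest G).1.exists_hasEigenvector
  rw [Module.End.hasEigenvector_iff, Module.End.mem_eigenspace_iff, Matrix.toLin'_apply] at hz
  obtain ⟨hz, hz0⟩ := hz
  set x : V → ℝ := fun v => |z v| with hx
  have hxx : x ⬝ᵥ x = z ⬝ᵥ z := by simp [dotProduct, hx]
  have hge : specRad G * (x ⬝ᵥ x) ≤ x ⬝ᵥ (G.adjMatrix ℝ *ᵥ x) := by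
    have e : specRad G * (z ⬝ᵥ z) = z ⬝ᵥ (G.adjMatrix ℝ *ᵥ z) := by
      rw [hz, dotProduct_smul, smul_eq_mul]
    rw [hxx, e]
    simp only [dotProduct, SimpleGraph.adjMatrix_mulVec_apply, Finset.mul_sum]
    refine Finset.sum_le_sum fun i _ => Finset.sum_le_sum fun j _ => ?_
    rw [hx]
    simp only
    rw [← abs_mul]
    exact le_abs_self _
  have hle := dotProduct_adj_le G x
  have hxe : G.adjMatrix ℝ *ᵥ x = specRad G • x := by
    have := ((specRad_posSemidef G).dotProduct_mulVec_zero_iff x).1 (by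
      simp only [star_trivial, Matrix.sub_mulVec, Matrix.smul_mulVec, Matrix.one_mulVec,
        dotProduct_sub, dotProduct_smul, smul_eq_mul]
      linarith)
    rw [Matrix.sub_mulVec, Matrix.smul_mulVec, Matrix.one_mulVec, sub_eq_zero] at this
    exact this.symm
  have hnn : ∀ v, 0 ≤ x v := fun v => abs_nonneg _
  have hprop : ∀ v w, G.Adj v w → x v = 0 → x w = 0 := by
    intro v w hvw hv
    have e := congrFun hxe v
    rw [SimpleGraph.adjMatrix_mulVec_apply, Pi.smul_apply, hv, smul_zero,
      Finset.sum_eq_zero_iff_of_nonneg (fun i _ => hnn i)] at e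
    exact e w (by simpa using hvw)
  refine ⟨x, fun v => lt_of_le_of_ne (hnn v) fun hv => hz0 ?_, hxe⟩
  funext w
  obtain ⟨p⟩ := hG.preconnected v w
  have : x w = 0 := by
    induction p with
    | nil => exact hv.symm
    | cons h p ih => exact ih (hprop _ _ h hv.symm).symm
  simpa [hx] using this

/-! ### Adjacency in the graph with two arms -/

section Attach

variable {V : Type*} (G : SimpleGraph V) (u : V) (m n : ℕ)

lemma adj_inl_inl (v w : V) :
    (attachTwoPaths G u m n).Adj (Sum.inl v) (Sum.inl w) ↔ G.Adj v w := by
  simp only [attachTwoPaths, SimpleGraph.fromRel_adj]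
  simp only [ne_eq, Sum.inl.injEq, reduceCtorEq, and_false, exists_false, or_false]
  constructor
  · rintro ⟨_, ⟨x, y, h, rfl, rfl⟩ | ⟨x, y, h, rfl, rfl⟩⟩
    · exact h
    · exact h.symm
  · intro h
    exact ⟨h.ne, Or.inl ⟨v, w, h, rfl, rfl⟩⟩

lemma adj_inl_left (v : V) (i : Fin m) :
    (attachTwoPaths G u m n).Adj (Sum.inl v) (Sum.inr (Sum.inl i)) ↔ v = u ∧ i.val = 0 := by
  simp [attachTwoPaths, SimpleGraph.fromRel_adj, and_comm]

lemma adj_inl_right (v : V) (i : Fin n) :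
    (attachTwoPaths G u m n).Adj (Sum.inl v) (Sum.inr (Sum.inr i)) ↔ v = u ∧ i.val = 0 := by
  simp [attachTwoPaths, SimpleGraph.fromRel_adj, and_comm]

lemma adj_left_left (i j : Fin m) :
    (attachTwoPaths G u m n).Adj (Sum.inr (Sum.inl i)) (Sum.inr (Sum.inl j)) ↔
      j.val = i.val + 1 ∨ i.val = j.val + 1 := by
  simp [attachTwoPaths, SimpleGraph.fromRel_adj, Fin.ext_iff]
  grind

lemma adj_right_right (i j : Fin n) :
    (attachTwoPaths G u m n).Adj (Sum.inr (Sum.inr i)) (Sum.inr (Sum.inr j)) ↔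
      j.val = i.val + 1 ∨ i.val = j.val + 1 := by
  simp [attachTwoPaths, SimpleGraph.fromRel_adj, Fin.ext_iff]
  grind

lemma adj_left_right (i : Fin m) (j : Fin n) :
    ¬ (attachTwoPaths G u m n).Adj (Sum.inr (Sum.inl i)) (Sum.inr (Sum.inr j)) := by
  simp [attachTwoPaths, SimpleGraph.fromRel_adj]

lemma attach_connected (hG : G.Connected) : (attachTwoPaths G u m n).Connected := by
  have hV : ∀ v : V, (attachTwoPaths G u m n).Reachable (Sum.inl u) (Sum.inl v) := fun v =>
    (hG.preconnected u v).map
      (⟨Sum.inl, fun {a b} h => (adj_inl_inl G u m n a b).2 h⟩ : G →g attachTwoPaths G u m n)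
  have hL : ∀ (k : ℕ) (hk : k < m),
      (attachTwoPaths G u m n).Reachable (Sum.inl u) (Sum.inr (Sum.inl ⟨k, hk⟩)) := by
    intro k
    induction k with
    | zero => exact fun hk => ((adj_inl_left G u m n u ⟨0, hk⟩).2 ⟨rfl, rfl⟩).reachable
    | succ k ih =>
      exact fun hk => (ih (by omega)).trans
        ((adj_left_left G u m n ⟨k, by omega⟩ ⟨k + 1, hk⟩).2 (Or.inl rfl)).reachable
  have hR : ∀ (k : ℕ) (hk : k < n),
      (attachTwoPaths G u m n).Reachable (Sum.inl u) (Sum.inr (Sum.inr ⟨k, hk⟩)) := by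
    intro k
    induction k with
    | zero => exact fun hk => ((adj_inl_right G u m n u ⟨0, hk⟩).2 ⟨rfl, rfl⟩).reachable
    | succ k ih =>
      exact fun hk => (ih (by omega)).trans
        ((adj_right_right G u m n ⟨k, by omega⟩ ⟨k + 1, hk⟩).2 (Or.inl rfl)).reachable
  have hall : ∀ v, (attachTwoPaths G u m n).Reachable (Sum.inl u) v := by
    rintro (v | i | i)
    · exact hV v
    · exact hL i.1 i.2
    · exact hR i.1 i.2
  exact { preconnected := fun v w => (hall v).symm.trans (hall w), nonempty := ⟨Sum.inl u⟩ }

/-- The vector on the vertices of `attachTwoPaths G u m n` with values `f` on `G`, and values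
`g 1, …, g m` and `h 1, …, h n` along the two arms, counted from `u`. -/
def armVec (f : V → ℝ) (g h : ℕ → ℝ) : V ⊕ Fin m ⊕ Fin n → ℝ :=
  Sum.elim f (Sum.elim (fun i => g (i.val + 1)) (fun i => h (i.val + 1)))

lemma sum_first (m : ℕ) (g : ℕ → ℝ) (hend : g (m + 1) = 0) :
    ∑ j : Fin m, (if j.val = 0 then g (j.val + 1) else 0) = g 1 := by
  cases m with
  | zero => simpa using hend.symm
  | succ m => rw [Fin.sum_univ_succ]; simp

lemma sum_nbrs (m : ℕ) (g : ℕ → ℝ) (hend : g (m + 1) = 0) (i : Fin m) :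
    (if i.val = 0 then g 0 else 0) +
      ∑ j : Fin m, (if j.val = i.val + 1 ∨ i.val = j.val + 1 then g (j.val + 1) else 0) =
    g i.val + g (i.val + 2) := by
  have hsplit : ∀ j : Fin m,
      (if j.val = i.val + 1 ∨ i.val = j.val + 1 then g (j.val + 1) else 0) =
      (if j.val = i.val + 1 then g (j.val + 1) else 0) +
        (if i.val = j.val + 1 then g (j.val + 1) else 0) := by
    intro j
    split_ifs <;> first | omega | simp
  simp only [hsplit, Finset.sum_add_distrib]
  have h1 : ∑ j : Fin m, (if j.val = i.val + 1 then g (j.val + 1) else 0) = g (i.val + 2) := by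
    by_cases hi : i.val + 1 < m
    · rw [Finset.sum_eq_single ⟨i.val + 1, hi⟩]
      · simp
      · intro j _ hj
        rw [if_neg]
        intro h
        exact hj (Fin.ext h)
      · simp
    · rw [show i.val + 2 = m + 1 by omega, hend]
      exact Finset.sum_eq_zero fun j _ => if_neg (by omega)
  have h2 : (if i.val = 0 then g 0 else 0) +
      ∑ j : Fin m, (if i.val = j.val + 1 then g (j.val + 1) else 0) = g i.val := by
    by_cases hi : i.val = 0
    · rw [if_pos hi, hi, Finset.sum_eq_zero, add_zero]
      intro j _
      exact if_neg (by omega)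
    · rw [if_neg hi, zero_add, Finset.sum_eq_single ⟨i.val - 1, by omega⟩]
      · simp only
        rw [if_pos (by omega), show i.val - 1 + 1 = i.val by omega]
      · intro j _ hj
        rw [if_neg]
        intro h
        exact hj (Fin.ext (by simp only; omega))
      · simp
  linarith

variable [Fintype V] [DecidableEq V] [DecidableRel (attachTwoPaths G u m n).Adj] (f : V → ℝ) (g h : ℕ → ℝ)

lemma mulVec_eq_sum_ite {W : Type*} [Fintype W] (H : SimpleGraph W) [DecidableRel H.Adj]
    (x : W → ℝ) (v : W) :
    (H.adjMatrix ℝ *ᵥ x) v = ∑ w, if H.Adj v w then x w else 0 := by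
  simp [Matrix.mulVec, dotProduct, SimpleGraph.adjMatrix_apply]

lemma mulVec_inl [DecidableRel G.Adj] (hgend : g (m + 1) = 0) (hhend : h (n + 1) = 0) (v : V) :
    ((attachTwoPaths G u m n).adjMatrix ℝ *ᵥ armVec m n f g h) (Sum.inl v) =
      (G.adjMatrix ℝ *ᵥ f) v + if v = u then g 1 + h 1 else 0 := by
  rw [mulVec_eq_sum_ite, mulVec_eq_sum_ite, Fintype.sum_sum_type, Fintype.sum_sum_type]
  simp only [adj_inl_inl, adj_inl_left, adj_inl_right, armVec, Sum.elim_inl, Sum.elim_inr]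
  congr 1
  by_cases hv : v = u
  · simp only [hv, true_and, if_true]
    rw [sum_first m g hgend, sum_first n h hhend]
  · simp [hv]

lemma mulVec_left (hg0 : g 0 = f u) (hgend : g (m + 1) = 0) (i : Fin m) :
    ((attachTwoPaths G u m n).adjMatrix ℝ *ᵥ armVec m n f g h) (Sum.inr (Sum.inl i)) =
      g i.val + g (i.val + 2) := by
  rw [mulVec_eq_sum_ite, Fintype.sum_sum_type, Fintype.sum_sum_type]
  simp only [SimpleGraph.adj_comm _ (Sum.inr (Sum.inl i)) (Sum.inl _), adj_inl_left,
    adj_left_left, adj_left_right, armVec, Sum.elim_inl, Sum.elim_inr, if_false,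
    Finset.sum_const_zero, add_zero]
  rw [← sum_nbrs m g hgend i]
  congr 1
  by_cases hi : i.val = 0 <;> simp [hi, hg0]

lemma mulVec_right (hh0 : h 0 = f u) (hhend : h (n + 1) = 0) (i : Fin n) :
    ((attachTwoPaths G u m n).adjMatrix ℝ *ᵥ armVec m n f g h) (Sum.inr (Sum.inr i)) =
      h i.val + h (i.val + 2) := by
  rw [mulVec_eq_sum_ite, Fintype.sum_sum_type, Fintype.sum_sum_type]
  simp only [SimpleGraph.adj_comm _ (Sum.inr (Sum.inr i)) (Sum.inl _), adj_inl_right,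
    SimpleGraph.adj_comm _ (Sum.inr (Sum.inr i)) (Sum.inr (Sum.inl _)),
    adj_right_right, adj_left_right, armVec, Sum.elim_inl, Sum.elim_inr, if_false,
    Finset.sum_const_zero, zero_add]
  rw [← sum_nbrs n h hhend i]
  congr 1
  by_cases hi : i.val = 0 <;> simp [hi, hh0]

end Attach

/-- The values along one arm, as a sequence starting at `u` and vanishing beyond the free end. -/
noncomputable def armSeq (m : ℕ) (w : ℝ) (t : Fin m → ℝ) : ℕ → ℝ
  | 0 => w
  | (k + 1) => if hk : k < m then t ⟨k, hk⟩ else 0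

lemma eq_armVec {V : Type*} (m n : ℕ) (u : V) (x : V ⊕ Fin m ⊕ Fin n → ℝ) :
    x = armVec m n (fun v => x (Sum.inl v))
      (armSeq m (x (Sum.inl u)) fun i => x (Sum.inr (Sum.inl i)))
      (armSeq n (x (Sum.inl u)) fun i => x (Sum.inr (Sum.inr i))) := by
  funext v
  rcases v with v | i | i <;> simp [armVec, armSeq]

/-- The new arm of length `m`: a multiple of `cheb` with value `w` at `u` and `0` beyond the end. -/
lemma newArm_rec (r w : ℝ) (m k : ℕ) (hk : k < m) :
    w * (cheb r (m + 1 - k) / cheb r (m + 1)) + w * (cheb r (m + 1 - (k + 2)) / cheb r (m + 1)) =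
      r * (w * (cheb r (m + 1 - (k + 1)) / cheb r (m + 1))) := by
  obtain ⟨t, rfl⟩ : ∃ t, m = k + 1 + t := ⟨m - (k + 1), by omega⟩
  rw [show k + 1 + t + 1 - k = t + 2 by omega, show k + 1 + t + 1 - (k + 2) = t by omega,
    show k + 1 + t + 1 - (k + 1) = t + 1 by omega, cheb_succ r t]
  ring

lemma switch_lt {V : Type*} [Fintype V] [DecidableEq V] (G : SimpleGraph V) (hG : G.Connected)
    (hcard : 2 ≤ Fintype.card V) (u : V) (a b : ℕ) (hab : a < b) :
    specRad (attachTwoPaths G u a (b + 1)) < specRad (attachTwoPaths G u (a + 1) b) := by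
  classical
  set r := specRad (attachTwoPaths G u a (b + 1)) with hr
  obtain ⟨x, hx, hxe⟩ := exists_perron _ (attach_connected G u a (b + 1) hG)
  rw [← hr] at hxe
  set f : V → ℝ := fun v => x (Sum.inl v) with hf
  set g := armSeq a (x (Sum.inl u)) fun i => x (Sum.inr (Sum.inl i)) with hg
  set h := armSeq (b + 1) (x (Sum.inl u)) fun i => x (Sum.inr (Sum.inr i)) with hh
  have hxv : x = armVec a (b + 1) f g h := eq_armVec a (b + 1) u x
  have hgend : g (a + 1) = 0 := by simp [hg, armSeq]
  have hhend : h (b + 1 + 1) = 0 := by simp [hh, armSeq]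
  have hg0 : g 0 = f u := by simp [hg, armSeq, hf]
  have hh0 : h 0 = f u := by simp [hh, armSeq, hf]
  have hfpos : ∀ v, 0 < f v := fun v => hx _
  have hhpos : ∀ k ≤ b + 1, 0 < h k := by
    intro k hk
    cases k with
    | zero => rw [hh0]; exact hfpos u
    | succ k =>
      have : k < b + 1 := by omega
      simp only [hh, armSeq, dif_pos this]
      exact hx _
  have hgrec : ∀ k < a, g k + g (k + 2) = r * g (k + 1) := by
    intro k hk
    have e := congrFun hxe (Sum.inr (Sum.inl ⟨k, hk⟩))
    rw [hxv, mulVec_left G u a (b + 1) f g h hg0 hgend] at e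
    simpa [armVec] using e
  have hhrec : ∀ k < b + 1, h k + h (k + 2) = r * h (k + 1) := by
    intro k hk
    have e := congrFun hxe (Sum.inr (Sum.inr ⟨k, hk⟩))
    rw [hxv, mulVec_right G u a (b + 1) f g h hh0 hhend] at e
    simpa [armVec] using e
  have hV : ∀ v, (G.adjMatrix ℝ *ᵥ f) v + (if v = u then g 1 + h 1 else 0) = r * f v := by
    intro v
    have e := congrFun hxe (Sum.inl v)
    rw [hxv, mulVec_inl G u a (b + 1) f g h hgend hhend] at e
    simpa [armVec] using e
  have hu := hV u
  rw [if_pos rfl, ← add_assoc] at hu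
  have hs : 0 < (G.adjMatrix ℝ *ᵥ f) u := by
    have : Nontrivial V := Fintype.one_lt_card_iff_nontrivial.1 hcard
    obtain ⟨w, hw⟩ := hG.preconnected.exists_adj_of_nontrivial u
    rw [SimpleGraph.adjMatrix_mulVec_apply]
    exact Finset.sum_pos (fun v _ => hfpos v) ⟨w, by simpa using hw⟩
  obtain ⟨pa, pb, gain⟩ := gain_pos r _ (f u) a b hab g h hs (hfpos u) hg0 hh0 hhpos hgend hhend
    hgrec hhrec hu
  -- The truncated subtractions below are only evaluated at `k ≤ a + 2` and `k ≤ b + 1`.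
  set g' : ℕ → ℝ := fun k => f u * (cheb r (a + 1 + 1 - k) / cheb r (a + 1 + 1)) with hg'
  set h' : ℕ → ℝ := fun k => f u * (cheb r (b + 1 - k) / cheb r (b + 1)) with hh'
  have hg'0 : g' 0 = f u := by
    simp only [hg', Nat.sub_zero]
    rw [div_self pa.ne', mul_one]
  have hh'0 : h' 0 = f u := by
    simp only [hh', Nat.sub_zero]
    rw [div_self pb.ne', mul_one]
  have hg'end : g' (a + 1 + 1) = 0 := by simp [hg', cheb_zero]
  have hh'end : h' (b + 1) = 0 := by simp [hh', cheb_zero]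
  set y := armVec (a + 1) b f g' h' with hy
  set δ := (G.adjMatrix ℝ *ᵥ f) u + g' 1 + h' 1 - r * f u with hδ
  have hδpos : 0 < δ := by
    have e1 : g' 1 = f u * (cheb r (a + 1) / cheb r (a + 2)) := rfl
    have e2 : h' 1 = f u * (cheb r b / cheb r (b + 1)) := rfl
    rw [hδ, e1, e2]
    linarith
  -- `y` satisfies the eigenvalue equation up to a positive defect concentrated at `u`.
  have hAy : (attachTwoPaths G u (a + 1) b).adjMatrix ℝ *ᵥ y =
      r • y + Pi.single (Sum.inl u) δ := by
    funext v
    rcases v with v | i | i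
    · rw [hy, mulVec_inl G u (a + 1) b f g' h' hg'end hh'end]
      by_cases hv : v = u
      · subst hv
        simp only [if_true, Pi.add_apply, Pi.smul_apply, smul_eq_mul, armVec, Sum.elim_inl,
          Pi.single_eq_same, hδ]
        ring
      · have e := hV v
        rw [if_neg hv] at e
        rw [if_neg hv, e]
        simp [hv, armVec]
    · rw [hy, mulVec_left G u (a + 1) b f g' h' hg'0 hg'end]
      have e : g' i.val + g' (i.val + 2) = r * g' (i.val + 1) :=
        newArm_rec r (f u) (a + 1) i.val i.2
      rw [e]
      simp [armVec]
    · rw [hy, mulVec_right G u (a + 1) b f g' h' hh'0 hh'end]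
      have e : h' i.val + h' (i.val + 2) = r * h' (i.val + 1) :=
        newArm_rec r (f u) b i.val i.2
      rw [e]
      simp [armVec]
  have : Nonempty (V ⊕ Fin (a + 1) ⊕ Fin b) := ⟨Sum.inl u⟩
  have hle := dotProduct_adj_le (attachTwoPaths G u (a + 1) b) y
  rw [hAy, dotProduct_add, dotProduct_smul, smul_eq_mul, dotProduct_single] at hle
  have hyu : y (Sum.inl u) = f u := rfl
  rw [hyu] at hle
  have hyy : 0 ≤ y ⬝ᵥ y := Finset.sum_nonneg fun i _ => mul_self_nonneg _
  by_contra hcon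
  have := mul_le_mul_of_nonneg_right (not_lt.1 hcon) hyy
  have := mul_pos (hfpos u) hδpos
  linarith

/-- Let `T0` be a tree with at least two vertices and `u` a vertex of `T0`. For
`1 ≤ q1 ≤ q2`, attaching at `u` pendant paths with `q1` and `q2` edges gives a tree of
strictly larger spectral radius than attaching pendant paths with `q1 - 1` and `q2 + 1`
edges. -/
theorem attach_paths_switch_decreases {V : Type*} [Fintype V] [DecidableEq V]
    (G : SimpleGraph V) (hG : G.IsTree) (hcard : 2 ≤ Fintype.card V) (u : V)
    (q1 q2 : ℕ) (hq1 : 1 ≤ q1) (hq12 : q1 ≤ q2) :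
    specRad (attachTwoPaths G u q1 q2) > specRad (attachTwoPaths G u (q1 - 1) (q2 + 1)) := by
  obtain ⟨a, rfl⟩ : ∃ a, q1 = a + 1 := ⟨q1 - 1, by omega⟩
  exact switch_lt G hG.connected hcard u a q2 hq12
end
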